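/- arXiv:1307.6440 — 3 statements merged into one kernel-verified Lean document; each statement's English description precedes it below -/
import Mathlib

section
/- The number of perfect matchings of 2m labeled points on a circle having exactly one pair of crossing chords equals binom(2m, m-2). -/
/-- Two chords `(p.1, p.2)` and `(q.1, q.2)` of a circle with vertices labeled
`0, 1, …, n-1` in circular order interleave, i.e. cross, when
`p.1 < q.1 < p.2 < q.2`. -/
def Interleaves {n : ℕ} (p q : Fin n × Fin n) : Prop :=
  p.1 < q.1 ∧ q.1 < p.2 ∧ p.2 < q.2

instance {n : ℕ} (p q : Fin n × Fin n) : Decidable (Interleaves p q) :=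
  inferInstanceAs (Decidable (_ ∧ _ ∧ _))

/-- The number of crossings of a set of chords (each chord recorded with its
endpoints in increasing order): the number of unordered pairs of chords whose
endpoints interleave around the circle. -/
def crossNum {n : ℕ} (D : Finset (Fin n × Fin n)) : ℕ :=
  ((D ×ˢ D).filter fun pq => Interleaves pq.1 pq.2).card

/-- A perfect matching of the `n` points `0, …, n-1` on a circle: a set of
chords, each recorded with increasing endpoints, such that every vertex
belongs to exactly one chord. -/
structure CircMatching (n : ℕ) where
  chords : Finset (Fin n × Fin n)
  lt : ∀ p ∈ chords, p.1 < p.2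
  mem_unique : ∀ v : Fin n, ∃! p, p ∈ chords ∧ (p.1 = v ∨ p.2 = v)

/-!
Every chord that is not crossed leaves the crossing on one side, so it can be oriented such that
the arc from its first end `x` to its second end avoids the crossing; call `x` an opener. A
matching of `2m` points with one crossing has `m - 2` openers, and conversely every set `S` of
`m - 2` points is the set of openers of exactly one such matching: as with parentheses on a
circle, an opener `x` immediately followed by a point `y` outside `S` must be joined to `y`, and
this chord can be removed. When `S` is exhausted, four points remain, joined crosswise.
-/

namespace CircMatching

section Chords

variable {α : Type*}

/-- The point `y` follows `x` in the circular order of the points of `V`, which need not contain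
`x` and `y`. -/
def CircAdj [CircularOrder α] (V : Finset α) (x y : α) : Prop :=
  x ≠ y ∧ ∀ v ∈ V, v ∉ Set.cIoo x y

theorem CircAdj.mono [CircularOrder α] {V W : Finset α} {x y : α} (h : CircAdj V x y)
    (hWV : W ⊆ V) : CircAdj W x y :=
  ⟨h.1, fun v hv => h.2 v (hWV hv)⟩

theorem exists_circAdj [CircularOrder α] [DecidableEq α] {V S : Finset α} (hS : S.Nonempty)
    (hVS : (V \ S).Nonempty) : ∃ x ∈ S, ∃ y ∈ V \ S, CircAdj V x y := by
  classical
  let between (r : α × α) : Finset α := {v ∈ V | v ∈ Set.cIoo r.1 r.2}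
  obtain ⟨⟨x, y⟩, hxy, hmin⟩ := (S ×ˢ (V \ S)).exists_min_image (fun r => (between r).card)
    (hS.product hVS)
  obtain ⟨hx, hy⟩ := Finset.mem_product.1 hxy
  refine ⟨x, hx, y, hy, fun h => (Finset.mem_sdiff.1 hy).2 (h ▸ hx), fun v hv hxvy => ?_⟩
  have not_ssubset : ∀ r ∈ S ×ˢ (V \ S), ¬ between r ⊂ between (x, y) := fun r hr h =>
    (Finset.card_lt_card h).not_ge (hmin r hr)
  have hv_mem : v ∈ between (x, y) := Finset.mem_filter.2 ⟨hv, hxvy⟩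
  by_cases hvS : v ∈ S
  · refine not_ssubset (v, y) (Finset.mk_mem_product hvS hy)
      ((Finset.ssubset_iff_of_subset fun w hw => ?_).2 ⟨v, hv_mem, fun h => ?_⟩)
    · exact Finset.mem_filter.2 ⟨(Finset.mem_filter.1 hw).1,
        SBtw.sbtw.trans_left hxvy (Finset.mem_filter.1 hw).2⟩
    · exact sbtw_irrefl_left (Finset.mem_filter.1 h).2
  · refine not_ssubset (x, v) (Finset.mk_mem_product hx (Finset.mem_sdiff.2 ⟨hv, hvS⟩))
      ((Finset.ssubset_iff_of_subset fun w hw => ?_).2 ⟨v, hv_mem, fun h => ?_⟩)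
    · exact Finset.mem_filter.2 ⟨(Finset.mem_filter.1 hw).1,
        sbtw_trans_right (Finset.mem_filter.1 hw).2 hxvy⟩
    · exact sbtw_irrefl_right (Finset.mem_filter.1 h).2

theorem mem_cIoo_or_mem_cIoo [CircularOrder α] {x y z : α} (hxy : x ≠ y) (hzx : z ≠ x)
    (hzy : z ≠ y) : z ∈ Set.cIoo x y ∨ z ∈ Set.cIoo y x := by
  simp only [Set.mem_cIoo, sbtw_iff_not_btw, ← not_and_or]
  rintro ⟨hyx, hxy'⟩
  rcases hyx.antisymm hxy' with h | h | h
  exacts [hzy h.symm, hzx h, hxy h]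

variable [LinearOrder α] {x y z w : α} {p : α × α}

/-- The chord with ends `x` and `y`, recorded with its ends in increasing order. -/
def chord (x y : α) : α × α := (min x y, max x y)

theorem chord_comm (x y : α) : chord x y = chord y x := by
  simp [chord, min_comm, max_comm]

theorem chord_of_le (h : x ≤ y) : chord x y = (x, y) := by
  simp [chord, h]

theorem chord_eq_chord_iff : chord x y = chord z w ↔ x = z ∧ y = w ∨ x = w ∧ y = z := by
  grind [chord]

theorem chord_right_inj : chord x y = chord x z ↔ y = z := by
  grind [chord]

theorem chord_fst_or_snd_eq (x y : α) : (chord x y).1 = x ∨ (chord x y).2 = x := by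
  grind [chord]

theorem exists_chord_eq_iff (hp : p.1 ≤ p.2) : (∃ y, chord x y = p) ↔ p.1 = x ∨ p.2 = x := by
  constructor
  · rintro ⟨y, rfl⟩
    exact chord_fst_or_snd_eq x y
  · rintro (rfl | rfl)
    · exact ⟨p.2, chord_of_le hp⟩
    · exact ⟨p.1, (chord_comm _ _).trans (chord_of_le hp)⟩

end Chords

variable {n : ℕ} {V S : Finset (Fin n)} {D : Finset (Fin n × Fin n)} {p q : Fin n × Fin n}
  {x y u v : Fin n}

/-- The chords `p` and `q` cross, in whichever order they are listed. -/
def Crosses (p q : Fin n × Fin n) : Prop := Interleaves p q ∨ Interleaves q p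

theorem not_crosses_self (p : Fin n × Fin n) : ¬ Crosses p p := by
  rintro (h | h) <;> exact lt_irrefl _ h.1

theorem crosses_comm : Crosses p q ↔ Crosses q p := or_comm

theorem crosses_chord_iff : Crosses (chord x y) (chord u v) ↔
    u ∈ Set.cIoo x y ∧ v ∈ Set.cIoo y x ∨ v ∈ Set.cIoo x y ∧ u ∈ Set.cIoo y x := by
  simp only [Crosses, Interleaves, chord, Set.mem_cIoo, Fin.sbtw_iff, min_def, max_def]
  split_ifs <;> omega

theorem mem_cIoo_or_mem_cIoo_of_not_crosses (hxy : x ≠ y) (hux : u ≠ x) (huy : u ≠ y)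
    (hvx : v ≠ x) (hvy : v ≠ y) (h : ¬ Crosses (chord x y) (chord u v)) :
    u ∈ Set.cIoo y x ∧ v ∈ Set.cIoo y x ∨ u ∈ Set.cIoo x y ∧ v ∈ Set.cIoo x y := by
  have hu := mem_cIoo_or_mem_cIoo hxy hux huy
  have hv := mem_cIoo_or_mem_cIoo hxy hvx hvy
  rw [crosses_chord_iff] at h
  tauto

theorem not_interleaves_of_mem_cIoo (hp₁ : p.1 ∈ Set.cIoo x y) (hp₂ : p.2 ∈ Set.cIoo x y)
    (hq₁ : q.1 ∈ Set.cIoo y x) (hq₂ : q.2 ∈ Set.cIoo y x) : ¬ Interleaves p q := by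
  simp only [Interleaves, Set.mem_cIoo, Fin.sbtw_iff] at *
  omega

/-- The ends of the chords of `D` that cross another chord of `D`. -/
def crossingPoints (D : Finset (Fin n × Fin n)) : Set (Fin n) :=
  {x | ∃ p ∈ D, ∃ q ∈ D, Crosses p q ∧ (p.1 = x ∨ p.2 = x)}

open Classical in
/-- The points `x` such that no crossing point of `D` lies on the closed arc that runs from `x`,
in increasing direction, to the other end `y` of its chord: all crossing points lie on the open
arc from `y` back to `x`. -/
noncomputable def openers (D : Finset (Fin n × Fin n)) : Finset (Fin n) :=
  {x | ∃ y, chord x y ∈ D ∧ crossingPoints D ⊆ Set.cIoo y x}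

theorem mem_openers : x ∈ openers D ↔ ∃ y, chord x y ∈ D ∧ crossingPoints D ⊆ Set.cIoo y x := by
  simp [openers]

theorem disjoint_openers_crossingPoints (D : Finset (Fin n × Fin n)) :
    Disjoint (openers D : Set (Fin n)) (crossingPoints D) := by
  rw [Set.disjoint_left]
  intro x hx hxD
  obtain ⟨y, -, hcross⟩ := mem_openers.1 hx
  exact sbtw_irrefl_right (Set.mem_cIoo.1 (hcross hxD))

theorem mem_crossingPoints_of_crosses (hxy : chord x y ∈ D) (hq : q ∈ D)
    (h : Crosses (chord x y) q) : x ∈ crossingPoints D :=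
  ⟨_, hxy, q, hq, h, chord_fst_or_snd_eq x y⟩

theorem not_crosses_of_crossingPoints_subset (hxy : chord x y ∈ D)
    (h : crossingPoints D ⊆ Set.cIoo y x) (hq : q ∈ D) : ¬ Crosses (chord x y) q := fun hcross =>
  sbtw_irrefl_right (Set.mem_cIoo.1 (h (mem_crossingPoints_of_crosses hxy hq hcross)))

theorem crossNum_insert (h : ∀ q ∈ D, ¬ Crosses p q) : crossNum (insert p D) = crossNum D := by
  unfold crossNum
  congr 1
  ext ⟨r, s⟩
  have := not_crosses_self p
  simp only [Finset.mem_filter, Finset.mem_product, Finset.mem_insert]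
  grind [Crosses]

theorem crossingPoints_insert (h : ∀ q ∈ D, ¬ Crosses p q) :
    crossingPoints (insert p D) = crossingPoints D := by
  ext x
  have := not_crosses_self p
  simp only [crossingPoints, Set.mem_ofPred_eq, Finset.mem_insert]
  grind [crosses_comm]

theorem openers_insert_chord (hne : (crossingPoints D).Nonempty)
    (hcross : ∀ q ∈ D, ¬ Crosses (chord x y) q) (hsub : crossingPoints D ⊆ Set.cIoo y x) :
    openers (insert (chord x y) D) = insert x (openers D) := by
  ext u
  simp only [mem_openers, Finset.mem_insert, crossingPoints_insert hcross]
  constructor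
  · rintro ⟨v, huv | huv, hsub'⟩
    · rcases chord_eq_chord_iff.1 huv with ⟨rfl, rfl⟩ | ⟨rfl, rfl⟩
      · exact Or.inl rfl
      · obtain ⟨z, hz⟩ := hne
        exact absurd (Set.mem_cIoo.1 (hsub hz)) (Set.mem_cIoo.1 (hsub' hz)).not_sbtw
    · exact Or.inr ⟨v, huv, hsub'⟩
  · rintro (rfl | ⟨v, huv, hsub'⟩)
    · exact ⟨y, Or.inl rfl, hsub⟩
    · exact ⟨v, Or.inr huv, hsub'⟩

/-- `D` is a perfect matching of the points of `V`, each chord recorded with increasing ends. -/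
structure IsMatchingOn (V : Finset (Fin n)) (D : Finset (Fin n × Fin n)) : Prop where
  lt : ∀ p ∈ D, p.1 < p.2
  left_mem : ∀ {x y}, chord x y ∈ D → x ∈ V
  existsUnique_chord_mem : ∀ {x}, x ∈ V → ∃! y, chord x y ∈ D

theorem isMatchingOn_univ_iff :
    IsMatchingOn Finset.univ D ↔ ∃ M : CircMatching n, M.chords = D := by
  constructor
  · refine fun h => ⟨⟨D, h.lt, fun v => ?_⟩, rfl⟩
    obtain ⟨w, hw, huniq⟩ := h.existsUnique_chord_mem (Finset.mem_univ v)
    refine ⟨chord v w, ⟨hw, chord_fst_or_snd_eq v w⟩, ?_⟩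
    rintro q ⟨hq, hqv⟩
    obtain ⟨z, rfl⟩ := (exists_chord_eq_iff (h.lt q hq).le).2 hqv
    rw [huniq z hq]
  · rintro ⟨M, rfl⟩
    refine ⟨M.lt, fun _ => Finset.mem_univ _, fun {x} _ => ?_⟩
    obtain ⟨p, ⟨hp, hpx⟩, huniq⟩ := M.mem_unique x
    obtain ⟨y, rfl⟩ := (exists_chord_eq_iff (M.lt p hp).le).2 hpx
    exact ⟨y, hp, fun z hz => chord_right_inj.1 (huniq _ ⟨hz, chord_fst_or_snd_eq x z⟩)⟩

namespace IsMatchingOn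

theorem exists_chord_eq (h : IsMatchingOn V D) (hp : p ∈ D) : ∃ x y, chord x y = p :=
  ⟨p.1, p.2, chord_of_le (h.lt p hp).le⟩

theorem right_mem (h : IsMatchingOn V D) (hxy : chord x y ∈ D) : y ∈ V :=
  h.left_mem (chord_comm x y ▸ hxy)

theorem chord_right_unique (h : IsMatchingOn V D) {z : Fin n} (hy : chord x y ∈ D)
    (hz : chord x z ∈ D) : y = z :=
  (h.existsUnique_chord_mem (h.left_mem hy)).unique hy hz

theorem ne_of_chord_mem (h : IsMatchingOn V D) (hxy : chord x y ∈ D) : x ≠ y := by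
  rintro rfl
  simpa [chord] using h.lt _ hxy

protected theorem erase (h : IsMatchingOn V D) (hxy : chord x y ∈ D) :
    IsMatchingOn (V \ {x, y}) (D.erase (chord x y)) where
  lt p hp := h.lt p (Finset.mem_of_mem_erase hp)
  left_mem {u v} huv := by
    obtain ⟨hne, huvD⟩ := Finset.mem_erase.1 huv
    simp only [Finset.mem_sdiff, Finset.mem_insert, Finset.mem_singleton]
    refine ⟨h.left_mem huvD, ?_⟩
    rintro (rfl | rfl)
    · exact hne (congrArg _ (h.chord_right_unique huvD hxy))
    · rw [chord_comm x] at hne hxy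
      exact hne (congrArg _ (h.chord_right_unique huvD hxy))
  existsUnique_chord_mem {u} hu := by
    simp only [Finset.mem_sdiff, Finset.mem_insert, Finset.mem_singleton, not_or] at hu
    have hne (v : Fin n) : chord u v ≠ chord x y := by grind [chord_eq_chord_iff]
    simpa [hne] using h.existsUnique_chord_mem hu.1

protected theorem insert (h : IsMatchingOn (V \ {x, y}) D) (hne : x ≠ y) (hx : x ∈ V) (hy : y ∈ V) :
    IsMatchingOn V (insert (chord x y) D) where
  lt := Finset.forall_mem_insert _ _ _ |>.2 ⟨by simpa [chord] using hne.symm, h.lt⟩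
  left_mem {u v} huv := by
    rcases Finset.mem_insert.1 huv with huv | huv
    · rcases chord_eq_chord_iff.1 huv with ⟨rfl, -⟩ | ⟨rfl, -⟩ <;> assumption
    · exact (Finset.mem_sdiff.1 (h.left_mem huv)).1
  existsUnique_chord_mem {u} hu := by
    by_cases hmem : u ∈ V \ {x, y}
    · have hne' (v : Fin n) : chord u v ≠ chord x y := by grind [chord_eq_chord_iff]
      simpa [hne'] using h.existsUnique_chord_mem hmem
    · have hnot (v : Fin n) : chord u v ∉ D := fun huv => hmem (h.left_mem huv)
      obtain rfl | rfl : u = x ∨ u = y := by simpa [hu, or_iff_not_imp_left] using hmem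
      · simp [hnot, chord_right_inj]
      · simp [hnot, chord_comm x, chord_right_inj]

theorem openers_subset (h : IsMatchingOn V D) : openers D ⊆ V := fun x hx => by
  obtain ⟨y, hxy, -⟩ := mem_openers.1 hx
  exact h.left_mem hxy

theorem crossingPoints_subset (h : IsMatchingOn V D) : crossingPoints D ⊆ V := by
  rintro x ⟨p, hp, -, -, -, hpx⟩
  obtain ⟨y, rfl⟩ := (exists_chord_eq_iff (h.lt p hp).le).2 hpx
  exact h.left_mem hp

theorem chord_mem_of_circAdj (h : IsMatchingOn V D) (hx : x ∈ openers D) (hyV : y ∈ V)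
    (hy : y ∉ openers D) (hadj : CircAdj V x y) : chord x y ∈ D := by
  obtain ⟨z, hxz, hsub⟩ := mem_openers.1 hx
  obtain ⟨w, hyw, -⟩ := h.existsUnique_chord_mem hyV
  by_contra hxy
  have hyz : y ≠ z := fun e => hxy (e ▸ hxz)
  have hwx : w ≠ x := fun e => hxy (chord_comm y x ▸ e ▸ hyw)
  have hwz : w ≠ z := fun e => hadj.1
    (h.chord_right_unique (chord_comm x z ▸ hxz) (chord_comm y z ▸ e ▸ hyw))
  have hxyz : sbtw x y z :=
    (mem_cIoo_or_mem_cIoo (h.ne_of_chord_mem hxz) hadj.1.symm hyz).resolve_right fun hzyx =>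
      hadj.2 z (h.right_mem hxz) (Set.mem_cIoo.2 (sbtw_cyclic_right (Set.mem_cIoo.1 hzyx)))
  have hywx : sbtw y w x :=
    (mem_cIoo_or_mem_cIoo hadj.1 hwx (h.ne_of_chord_mem hyw).symm).resolve_left
      (hadj.2 w (h.right_mem hyw))
  rcases mem_cIoo_or_mem_cIoo (h.ne_of_chord_mem hxz) hwx hwz with hxwz | hzwx
  · refine hy (mem_openers.2 ⟨w, hyw, hsub.trans fun u hzux => ?_⟩)
    have hxwu : sbtw x w u := sbtw_trans_right hxwz (sbtw_cyclic_right hzux)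
    exact sbtw_trans_right (sbtw_cyclic_left hxwu) (sbtw_cyclic_left hywx)
  · exact not_crosses_of_crossingPoints_subset hxz hsub hyw
      (crosses_chord_iff.2 (Or.inl ⟨hxyz, hzwx⟩))

theorem not_crosses_of_circAdj (h : IsMatchingOn V D) (hadj : CircAdj V x y) (hq : q ∈ D) :
    ¬ Crosses (chord x y) q := by
  obtain ⟨u, v, rfl⟩ := h.exists_chord_eq hq
  rw [crosses_chord_iff]
  rintro (⟨hu, -⟩ | ⟨hv, -⟩)
  · exact hadj.2 u (h.left_mem hq) hu
  · exact hadj.2 v (h.right_mem hq) hv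

theorem crossNum_insert_chord (h : IsMatchingOn (V \ {x, y}) D) (hadj : CircAdj V x y) :
    crossNum (insert (chord x y) D) = crossNum D :=
  crossNum_insert fun _ => h.not_crosses_of_circAdj (hadj.mono Finset.sdiff_subset)

protected theorem openers_insert_chord (h : IsMatchingOn (V \ {x, y}) D) (hadj : CircAdj V x y)
    (hne : (crossingPoints D).Nonempty) :
    openers (insert (chord x y) D) = insert x (openers D) := by
  refine openers_insert_chord hne
    (fun _ => h.not_crosses_of_circAdj (hadj.mono Finset.sdiff_subset)) fun v hv => ?_
  obtain ⟨hvV, hvxy⟩ := Finset.mem_sdiff.1 (h.crossingPoints_subset hv)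
  simp only [Finset.mem_insert, Finset.mem_singleton, not_or] at hvxy
  exact (mem_cIoo_or_mem_cIoo hadj.1 hvxy.1 hvxy.2).resolve_left (hadj.2 v hvV)

end IsMatchingOn

theorem crossNum_eq_one_iff : crossNum D = 1 ↔
    ∃ p ∈ D, ∃ q ∈ D, Interleaves p q ∧
      ∀ r ∈ D, ∀ s ∈ D, Interleaves r s → r = p ∧ s = q := by
  simp only [crossNum, Finset.card_eq_one, Finset.eq_singleton_iff_unique_mem, Prod.exists,
    Prod.forall, Finset.mem_filter, Finset.mem_product, Prod.mk.injEq]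
  grind

theorem exists_crossingPoints_eq (h : crossNum D = 1) :
    ∃ a b c d, a < b ∧ b < c ∧ c < d ∧ (a, c) ∈ D ∧ (b, d) ∈ D ∧
      crossingPoints D = {a, b, c, d} := by
  obtain ⟨⟨a, c⟩, hac, ⟨b, d⟩, hbd, hcross, huniq⟩ := crossNum_eq_one_iff.1 h
  refine ⟨a, b, c, d, hcross.1, hcross.2.1, hcross.2.2, hac, hbd, ?_⟩
  ext x
  simp only [crossingPoints, Crosses, Set.mem_ofPred_eq, Set.mem_insert_iff,
    Set.mem_singleton_iff]
  constructor
  · rintro ⟨p, hp, q, hq, hpq | hqp, hpx⟩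
    · obtain ⟨rfl, rfl⟩ := huniq p hp q hq hpq
      grind
    · obtain ⟨rfl, rfl⟩ := huniq q hq p hp hqp
      grind
  · rintro (rfl | rfl | rfl | rfl)
    · exact ⟨_, hac, _, hbd, Or.inl hcross, Or.inl rfl⟩
    · exact ⟨_, hbd, _, hac, Or.inr hcross, Or.inl rfl⟩
    · exact ⟨_, hac, _, hbd, Or.inl hcross, Or.inr rfl⟩
    · exact ⟨_, hbd, _, hac, Or.inr hcross, Or.inr rfl⟩

namespace IsMatchingOn

theorem right_mem_crossingPoints (h : IsMatchingOn V D) (hxy : chord x y ∈ D)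
    (hx : x ∈ crossingPoints D) : y ∈ crossingPoints D := by
  obtain ⟨p, hp, q, hq, hcross, hpx⟩ := hx
  obtain ⟨z, rfl⟩ := (exists_chord_eq_iff (h.lt p hp).le).2 hpx
  obtain rfl := h.chord_right_unique hxy hp
  rw [chord_comm] at hp hcross
  exact mem_crossingPoints_of_crosses hp hq hcross

theorem mem_openers_or_mem_openers (h : IsMatchingOn V D) (hD : crossNum D = 1)
    (hxy : chord x y ∈ D) (hx : x ∉ crossingPoints D) : x ∈ openers D ∨ y ∈ openers D := by
  obtain ⟨a, b, c, d, hab, hbc, hcd, hac, hbd, hpts⟩ := exists_crossingPoints_eq hD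
  have hyx : chord y x ∈ D := chord_comm x y ▸ hxy
  have hy : y ∉ crossingPoints D := fun hy => hx (h.right_mem_crossingPoints hyx hy)
  have same_side {u v} (huv : (u, v) ∈ D) (hu : u ∈ crossingPoints D)
      (hv : v ∈ crossingPoints D) :
      u ∈ Set.cIoo y x ∧ v ∈ Set.cIoo y x ∨ u ∈ Set.cIoo x y ∧ v ∈ Set.cIoo x y := by
    rw [← chord_of_le (h.lt _ huv).le] at huv
    exact mem_cIoo_or_mem_cIoo_of_not_crosses (h.ne_of_chord_mem hxy)
      (ne_of_mem_of_not_mem hu hx) (ne_of_mem_of_not_mem hu hy)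
      (ne_of_mem_of_not_mem hv hx) (ne_of_mem_of_not_mem hv hy)
      fun hc => hx (mem_crossingPoints_of_crosses hxy huv hc)
  suffices crossingPoints D ⊆ Set.cIoo y x ∨ crossingPoints D ⊆ Set.cIoo x y from
    this.imp (fun hs => mem_openers.2 ⟨y, hxy, hs⟩) (fun hs => mem_openers.2 ⟨x, hyx, hs⟩)
  have hac_side := same_side hac (by simp [hpts]) (by simp [hpts])
  have hbd_side := same_side hbd (by simp [hpts]) (by simp [hpts])
  have hcross : Interleaves (a, c) (b, d) := ⟨hab, hbc, hcd⟩
  simp only [hpts, Set.insert_subset_iff, Set.singleton_subset_iff]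
  rcases hac_side with ⟨ha, hc⟩ | ⟨ha, hc⟩ <;> rcases hbd_side with ⟨hb, hd⟩ | ⟨hb, hd⟩
  · exact Or.inl ⟨ha, hb, hc, hd⟩
  · exact absurd hcross (not_interleaves_of_mem_cIoo ha hc hb hd)
  · exact absurd hcross (not_interleaves_of_mem_cIoo ha hc hb hd)
  · exact Or.inr ⟨ha, hb, hc, hd⟩

end IsMatchingOn

/-- `D` is a perfect matching of the points of `V` with one crossing, and `S` is its set of
openers. -/
structure IsOneCrossing (V S : Finset (Fin n)) (D : Finset (Fin n × Fin n)) : Prop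
    extends IsMatchingOn V D where
  crossNum_eq : crossNum D = 1
  openers_eq : openers D = S

namespace IsOneCrossing

theorem crossingPoints_nonempty (h : IsOneCrossing V S D) : (crossingPoints D).Nonempty := by
  obtain ⟨a, b, c, d, -, -, -, -, -, hpts⟩ := exists_crossingPoints_eq h.crossNum_eq
  exact ⟨a, by simp [hpts]⟩

protected theorem insert (h : IsOneCrossing (V \ {x, y}) S D) (hx : x ∈ V) (hy : y ∈ V)
    (hadj : CircAdj V x y) :
    IsOneCrossing V (insert x S) (insert (chord x y) D) where
  toIsMatchingOn := h.toIsMatchingOn.insert hadj.1 hx hy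
  crossNum_eq := (h.crossNum_insert_chord hadj).trans h.crossNum_eq
  openers_eq := by rw [h.openers_insert_chord hadj h.crossingPoints_nonempty, h.openers_eq]

protected theorem erase (h : IsOneCrossing V S D) (hx : x ∈ S) (hy : y ∈ V \ S)
    (hadj : CircAdj V x y) :
    IsOneCrossing (V \ {x, y}) (S.erase x) (D.erase (chord x y)) := by
  obtain ⟨hyV, hyS⟩ := Finset.mem_sdiff.1 hy
  rw [← h.openers_eq] at hx hyS
  have hxy : chord x y ∈ D := h.chord_mem_of_circAdj hx hyV hyS hadj
  have hE : IsMatchingOn (V \ {x, y}) (D.erase (chord x y)) := h.toIsMatchingOn.erase hxy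
  have hcross : crossNum (D.erase (chord x y)) = 1 := by
    rw [← hE.crossNum_insert_chord hadj, Finset.insert_erase hxy, h.crossNum_eq]
  have hxE : x ∉ openers (D.erase (chord x y)) := fun hx' => by
    simpa using hE.openers_subset hx'
  refine ⟨hE, hcross, ?_⟩
  have hne := crossingPoints_nonempty ⟨hE, hcross, rfl⟩
  rw [← Finset.erase_insert hxE, ← hE.openers_insert_chord hadj hne, Finset.insert_erase hxy,
    h.openers_eq]

protected theorem exists_circAdj (h : IsOneCrossing V S D) (hS : S.Nonempty) :
    ∃ x ∈ S, ∃ y ∈ V \ S, CircAdj V x y := by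
  refine exists_circAdj hS ?_
  obtain ⟨v, hv⟩ := h.crossingPoints_nonempty
  refine ⟨v, Finset.mem_sdiff.2 ⟨h.crossingPoints_subset hv, fun hvS => ?_⟩⟩
  exact (disjoint_openers_crossingPoints D).notMem_of_mem_right hv (h.openers_eq ▸ hvS)

theorem card_eq_four (h : IsOneCrossing V ∅ D) : V.card = 4 := by
  obtain ⟨a, b, c, d, hab, hbc, hcd, -, -, hpts⟩ := exists_crossingPoints_eq h.crossNum_eq
  have hV : (V : Set (Fin n)) = crossingPoints D := by
    refine h.crossingPoints_subset.antisymm' fun v hv => ?_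
    by_contra hv_not
    obtain ⟨w, hvw, -⟩ := h.existsUnique_chord_mem hv
    simpa [h.openers_eq] using h.mem_openers_or_mem_openers h.crossNum_eq hvw hv_not
  obtain rfl : V = {a, b, c, d} := by
    rw [← Finset.coe_inj, hV, hpts]
    simp
  grind

theorem card_eq (h : IsOneCrossing V S D) : V.card = 2 * S.card + 4 := by
  induction hk : S.card generalizing V S D with
  | zero =>
    obtain rfl := Finset.card_eq_zero.1 hk
    exact h.card_eq_four
  | succ k ih =>
    obtain ⟨x, hx, y, hy, hadj⟩ := h.exists_circAdj (Finset.card_pos.1 (by omega))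
    have hcard : (V \ {x, y}).card + 2 = V.card := by
      rw [← Finset.card_pair hadj.1]
      refine Finset.card_sdiff_add_card_eq_card (Finset.insert_subset_iff.2 ⟨?_, ?_⟩)
      · exact h.toIsMatchingOn.openers_subset (h.openers_eq ▸ hx)
      · exact Finset.singleton_subset_iff.2 (Finset.mem_sdiff.1 hy).1
    have := ih (h.erase hx hy hadj) (by rw [Finset.card_erase_of_mem hx, hk]; rfl)
    omega

end IsOneCrossing

section Quadruples

theorem exists_eq_quadruple {α : Type*} [LinearOrder α] {V : Finset α} (hV : V.card = 4) :
    ∃ a b c d, a < b ∧ b < c ∧ c < d ∧ V = {a, b, c, d} := by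
  let f := V.orderEmbOfFin hV
  refine ⟨f 0, f 1, f 2, f 3, f.strictMono (by decide), f.strictMono (by decide),
    f.strictMono (by decide), ?_⟩
  rw [← Finset.coe_inj, ← Finset.range_orderEmbOfFin V hV]
  ext v
  simp only [Set.mem_range, Fin.exists_fin_succ]
  simp [f, eq_comm]

theorem eq_quadruple_of_subset {α : Type*} [LinearOrder α] {a b c d a' b' c' d' : α}
    (hab : a < b) (hbc : b < c) (hcd : c < d) (hab' : a' < b') (hbc' : b' < c')
    (hcd' : c' < d') (h : ({a', b', c', d'} : Finset α) ⊆ {a, b, c, d}) :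
    a' = a ∧ b' = b ∧ c' = c ∧ d' = d := by
  simp only [Finset.insert_subset_iff, Finset.singleton_subset_iff, Finset.mem_insert,
    Finset.mem_singleton] at h
  grind

variable {a b c d : Fin n}

theorem isOneCrossing_pair (hab : a < b) (hbc : b < c) (hcd : c < d) :
    IsOneCrossing {a, b, c, d} ∅ {(a, c), (b, d)} := by
  have hac := hab.trans hbc
  have hbd := hbc.trans hcd
  have hmatch : IsMatchingOn {a, b, c, d} {(a, c), (b, d)} := by
    refine ⟨by simp [hac, hbd], fun {x y} h => ?_, fun {x} hx => ?_⟩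
    · simp only [chord, Finset.mem_insert, Finset.mem_singleton, Prod.mk.injEq] at h
      grind
    · simp only [Finset.mem_insert, Finset.mem_singleton] at hx
      rw [← chord_of_le hac.le, ← chord_of_le hbd.le]
      simp only [Finset.mem_insert, Finset.mem_singleton, chord_eq_chord_iff]
      rcases hx with rfl | rfl | rfl | rfl
      · exact ⟨c, by simp, by grind⟩
      · exact ⟨d, by simp, by grind⟩
      · exact ⟨a, by simp, by grind⟩
      · exact ⟨b, by simp, by grind⟩
  have hcross : crossNum {(a, c), (b, d)} = 1 :=
    crossNum_eq_one_iff.2 ⟨(a, c), by simp, (b, d), by simp, ⟨hab, hbc, hcd⟩, by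
      simp only [Finset.mem_insert, Finset.mem_singleton, Interleaves]
      grind⟩
  have hcard := IsOneCrossing.card_eq ⟨hmatch, hcross, rfl⟩
  have := Finset.card_le_four (a := a) (b := b) (c := c) (d := d)
  exact ⟨hmatch, hcross, Finset.card_eq_zero.1 (by omega)⟩

theorem IsMatchingOn.eq_pair (h : IsMatchingOn {a, b, c, d} D) (hac : (a, c) ∈ D)
    (hbd : (b, d) ∈ D) : D = {(a, c), (b, d)} := by
  have hac_le : a ≤ c := (h.lt _ hac).le
  have hbd_le : b ≤ d := (h.lt _ hbd).le
  rw [← chord_of_le hac_le] at hac ⊢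
  rw [← chord_of_le hbd_le] at hbd ⊢
  refine subset_antisymm (fun p hp => ?_) (by simp [Finset.insert_subset_iff, hac, hbd])
  obtain ⟨x, y, rfl⟩ := h.exists_chord_eq hp
  have hca := chord_comm a c ▸ hac
  have hdb := chord_comm b d ▸ hbd
  have hx := h.left_mem hp
  simp only [Finset.mem_insert, Finset.mem_singleton, chord_eq_chord_iff] at hx ⊢
  rcases hx with rfl | rfl | rfl | rfl
  · simp [h.chord_right_unique hp hac]
  · simp [h.chord_right_unique hp hbd]
  · simp [h.chord_right_unique hp hca]
  · simp [h.chord_right_unique hp hdb]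

theorem IsOneCrossing.eq_pair (h : IsOneCrossing {a, b, c, d} S D) (hab : a < b) (hbc : b < c)
    (hcd : c < d) : D = {(a, c), (b, d)} := by
  obtain ⟨a', b', c', d', hab', hbc', hcd', hac', hbd', hpts⟩ :=
    exists_crossingPoints_eq h.crossNum_eq
  have hsub : ({a', b', c', d'} : Finset (Fin n)) ⊆ {a, b, c, d} := by
    rw [← Finset.coe_subset]
    simpa [← hpts] using h.crossingPoints_subset
  obtain ⟨rfl, rfl, rfl, rfl⟩ := eq_quadruple_of_subset hab hbc hcd hab' hbc' hcd' hsub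
  exact h.toIsMatchingOn.eq_pair hac' hbd'

end Quadruples

theorem existsUnique_isOneCrossing (hSV : S ⊆ V) (hV : V.card = 2 * S.card + 4) :
    ∃! D, IsOneCrossing V S D := by
  induction hk : S.card generalizing V S with
  | zero =>
    obtain rfl := Finset.card_eq_zero.1 hk
    obtain ⟨a, b, c, d, hab, hbc, hcd, rfl⟩ := exists_eq_quadruple hV
    exact ⟨_, isOneCrossing_pair hab hbc hcd, fun D hD => hD.eq_pair hab hbc hcd⟩
  | succ k ih =>
    obtain ⟨x, hx, y, hy, hadj⟩ : ∃ x ∈ S, ∃ y ∈ V \ S, CircAdj V x y :=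
      exists_circAdj (Finset.card_pos.1 (by omega))
        (Finset.card_pos.1 (by rw [Finset.card_sdiff_of_subset hSV]; omega))
    obtain ⟨hyV, hyS⟩ := Finset.mem_sdiff.1 hy
    have hpair : {x, y} ⊆ V := by simp [Finset.insert_subset_iff, hSV hx, hyV]
    have hcard := Finset.card_sdiff_add_card_eq_card hpair
    rw [Finset.card_pair hadj.1] at hcard
    have hsub : S.erase x ⊆ V \ {x, y} := by grind
    have hcardS := Finset.card_erase_add_one hx
    obtain ⟨D, hD, huniq⟩ := ih hsub (by omega) (by omega)
    refine ⟨insert (chord x y) D, ?_, fun E hE => ?_⟩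
    · simpa [Finset.insert_erase hx] using hD.insert (hSV hx) hyV hadj
    · rw [← huniq _ (hE.erase hx hy hadj), Finset.insert_erase]
      exact hE.chord_mem_of_circAdj (hE.openers_eq ▸ hx) hyV (hE.openers_eq ▸ hyS) hadj

theorem chords_injective : Function.Injective (chords : CircMatching n → _) := by
  rintro ⟨D, _, _⟩ ⟨E, _, _⟩ rfl
  rfl

theorem bijOn_openers {k : ℕ} (hn : n = 2 * k + 4) :
    Set.BijOn (fun M : CircMatching n => openers M.chords) {M | crossNum M.chords = 1}
      {S | S.card = k} := by
  have isOneCrossing {M : CircMatching n} (hM : crossNum M.chords = 1) :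
      IsOneCrossing Finset.univ (openers M.chords) M.chords :=
    ⟨isMatchingOn_univ_iff.2 ⟨M, rfl⟩, hM, rfl⟩
  have card_openers {M : CircMatching n} (hM : crossNum M.chords = 1) :
      (openers M.chords).card = k := by
    have := (isOneCrossing hM).card_eq
    rw [Finset.card_fin] at this
    omega
  have existsUnique {S : Finset (Fin n)} (hS : S.card = k) :
      ∃! D, IsOneCrossing Finset.univ S D :=
    existsUnique_isOneCrossing S.subset_univ (by rw [Finset.card_fin, hS, hn])
  refine ⟨fun M hM => card_openers hM, fun M hM N hN hMN => ?_, fun S hS => ?_⟩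
  · have hN' : IsOneCrossing Finset.univ (openers M.chords) N.chords := by
      simpa only [hMN] using isOneCrossing hN
    exact chords_injective ((existsUnique (card_openers hM)).unique (isOneCrossing hM) hN')
  · obtain ⟨D, hD, -⟩ := existsUnique hS
    obtain ⟨M, rfl⟩ := isMatchingOn_univ_iff.1 hD.toIsMatchingOn
    exact ⟨M, hD.crossNum_eq, hD.openers_eq⟩

end CircMatching

/-- The number of perfect matchings of `2m` labeled points on a circle having
exactly one pair of crossing chords equals `binom(2m, m-2)`. -/
theorem card_matchings_one_crossing (m : ℕ) (hm : 2 ≤ m) :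
    Nat.card {M : CircMatching (2 * m) // crossNum M.chords = 1} =
      Nat.choose (2 * m) (m - 2) := by
  have hopeners := CircMatching.bijOn_openers (n := 2 * m) (k := m - 2) (by omega)
  calc Nat.card {M : CircMatching (2 * m) // crossNum M.chords = 1}
      = Nat.card {S : Finset (Fin (2 * m)) // S.card = m - 2} := Nat.card_congr hopeners.equiv
    _ = Nat.choose (2 * m) (m - 2) := by
      rw [Nat.card_eq_fintype_card, Fintype.card_finset_len, Fintype.card_fin]
end

section
/- For any core matching K with k(K) ≥ 1 crossings, the number n_1(K) of regions of K with exactly one boundary arc satisfies n_1(K) ≤ 3·k(K) + 1, with equality only when k(K) = 1. -/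
/-- Two chords cross when their endpoints interleave, in either order. -/
def CrossRel {n : ℕ} (p q : Fin n × Fin n) : Prop :=
  Interleaves p q ∨ Interleaves q p

/-- A core matching: a perfect matching in which every chord is involved in at
least one crossing. -/
def IsCoreMatching {n : ℕ} (M : CircMatching n) : Prop :=
  ∀ p ∈ M.chords, ∃ q ∈ M.chords, CrossRel p q

/-- The `n` points on the unit circle, labeled in circular order. -/
noncomputable def circPt (n : ℕ) (j : Fin n) : ℂ :=
  Complex.exp (2 * (Real.pi : ℂ) * Complex.I * ((j : ℕ) : ℂ) / ((n : ℕ) : ℂ))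

/-- The chord of the unit circle joining the points labeled `p.1` and `p.2`,
as a segment in the plane. -/
noncomputable def chordSeg (n : ℕ) (p : Fin n × Fin n) : Set ℂ :=
  segment ℝ (circPt n p.1) (circPt n p.2)

/-- The complement of a set of chords in the closed unit disk. -/
noncomputable def diskComplement {n : ℕ} (D : Finset (Fin n × Fin n)) : Set ℂ :=
  Metric.closedBall (0 : ℂ) 1 \ ⋃ p ∈ D, chordSeg n p

/-- The regions of a set of chords: the connected components of the complement
of the chords in the closed unit disk. -/
noncomputable def regions {n : ℕ} (D : Finset (Fin n × Fin n)) : Set (Set ℂ) :=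
  {C | ∃ x ∈ diskComplement D, C = connectedComponentIn (diskComplement D) x}

/-- The number of boundary arcs of a region: the number of connected components
of its intersection with the unit circle. -/
noncomputable def arcCount (C : Set ℂ) : ℕ :=
  Nat.card (ConnectedComponents ↥(C ∩ Metric.sphere (0 : ℂ) 1))

/-- `nReg D i` is the number `nᵢ` of regions of the chord configuration `D`
having exactly `i` boundary arcs. -/
noncomputable def nReg {n : ℕ} (D : Finset (Fin n × Fin n)) (i : ℕ) : ℕ :=
  Nat.card {C : Set ℂ // C ∈ regions D ∧ arcCount C = i}

/-!
Call an arc between consecutive vertices isolated if every other arc is separated from it by some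
chord. Two arcs on the same side of every chord are joined by a segment that avoids all chords, so
a region with exactly one boundary arc meets the circle in one isolated arc, which determines it.
Hence `n₁` is at most the number of isolated arcs.

Let the crossing graph have the `n / 2` chords as vertices, the `k` crossings as edges, and `c`
components, so that `n / 2 ≤ k + c`; as no chord is isolated in it, `c ≤ k`. If `c = 1`, then
`n₁ ≤ n ≤ 2 * k + 2`. If `c ≥ 2`, every component `Y` has a vertex whose following arc is not
isolated: no chord of `Y` separates the arc before the first vertex of `Y` from the arc after the
last one, and a chord outside `Y` has all of `Y` on one side. Therefore
`n₁ ≤ n - c ≤ 2 * k + c ≤ 3 * k`.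
-/

section Graph

variable {V : Type*} {G : SimpleGraph V}

theorem card_vert_le_card_edgeSet_add_card_connectedComponent [Finite V] (G : SimpleGraph V) :
    Nat.card V ≤ Nat.card G.edgeSet + Nat.card G.ConnectedComponent := by
  have := Fintype.ofFinite G.ConnectedComponent
  let edge : (Σ C : G.ConnectedComponent, C.toSimpleGraph.edgeSet) → G.edgeSet :=
    fun e => (SimpleGraph.Embedding.induce e.1.supp).mapEdgeSet e.2
  have hedge : Function.Injective edge := by
    rintro ⟨C, e, he⟩ ⟨D, f, hf⟩ h
    obtain rfl : C = D := by
      have hef : e.map Subtype.val = f.map Subtype.val := congrArg Subtype.val h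
      have hmem : e.out.1.1 ∈ e.map Subtype.val := Sym2.mem_map.2 ⟨e.out.1, e.out_fst_mem, rfl⟩
      obtain ⟨w, -, hw⟩ := Sym2.mem_map.1 (hef ▸ hmem)
      exact e.out.1.2.symm.trans (hw ▸ w.2)
    obtain rfl : e = f := congrArg Subtype.val ((SimpleGraph.Embedding.mapEdgeSet _).injective h)
    rfl
  calc Nat.card V
    _ = ∑ C : G.ConnectedComponent, Nat.card C.supp := by
      rw [← Nat.card_sigma]
      exact Nat.card_congr (Equiv.sigmaFiberEquiv G.connectedComponentMk).symm
    _ ≤ ∑ C : G.ConnectedComponent, (Nat.card C.toSimpleGraph.edgeSet + 1) :=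
      Finset.sum_le_sum fun C _ => C.connected_toSimpleGraph.card_vert_le_card_edgeSet_add_one
    _ = Nat.card (Σ C : G.ConnectedComponent, C.toSimpleGraph.edgeSet)
          + Nat.card G.ConnectedComponent := by
      simp [Finset.sum_add_distrib, Nat.card_sigma]
    _ ≤ Nat.card G.edgeSet + Nat.card G.ConnectedComponent := by
      gcongr
      exact Nat.card_le_card_of_injective edge hedge

theorem card_connectedComponent_le_card_edgeSet [Finite G.edgeSet] (h : ∀ v, ¬ G.IsIsolated v) :
    Nat.card G.ConnectedComponent ≤ Nat.card G.edgeSet := by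
  refine Nat.card_le_card_of_surjective
    (fun e : G.edgeSet => G.connectedComponentMk e.1.out.1) fun C => C.ind fun v => ?_
  obtain ⟨w, hvw⟩ : ∃ w, G.Adj v w := by simpa [SimpleGraph.IsIsolated] using h v
  refine ⟨⟨s(v, w), hvw⟩, ?_⟩
  rcases Sym2.mem_iff.1 (Sym2.out_fst_mem s(v, w)) with hv | hw
  · simp only [hv]
  · simp only [hw, SimpleGraph.ConnectedComponent.sound hvw.reachable]

end Graph

section Crossing

variable {n : ℕ}

/-- The crossing graph of a set of chords: two chords are adjacent when they cross. -/
def crossGraph (D : Finset (Fin n × Fin n)) : SimpleGraph D where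
  Adj p q := CrossRel p.1 q.1
  symm := ⟨fun _ _ => Or.symm⟩
  loopless := ⟨fun _ h => h.elim (fun h => h.1.false) fun h => h.1.false⟩

theorem card_edgeSet_crossGraph_le_crossNum (D : Finset (Fin n × Fin n)) :
    Nat.card (crossGraph D).edgeSet ≤ crossNum D := by
  rw [crossNum, ← Nat.card_eq_finsetCard]
  let pair (x : (D ×ˢ D).filter fun pq => Interleaves pq.1 pq.2) : (crossGraph D).edgeSet :=
    have hx := Finset.mem_filter.1 x.2
    have hD := Finset.mem_product.1 hx.1
    ⟨s(⟨x.1.1, hD.1⟩, ⟨x.1.2, hD.2⟩), Or.inl hx.2⟩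
  refine Nat.card_le_card_of_surjective pair ?_
  rintro ⟨⟨p, q⟩, hpq | hqp⟩
  · exact ⟨⟨(p.1, q.1), by simpa using hpq⟩, rfl⟩
  · exact ⟨⟨(q.1, p.1), by simpa using hqp⟩, Subtype.ext Sym2.eq_swap⟩

theorem fst_mem_Ioo_iff_snd_mem_Ioo {c p : Fin n × Fin n} (hp : p.1 < p.2) (h₁ : p.1 ≠ c.1)
    (h₂ : p.2 ≠ c.2) (hcp : ¬ CrossRel c p) :
    p.1 ∈ Set.Ioo c.1 c.2 ↔ p.2 ∈ Set.Ioo c.1 c.2 := by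
  simp only [CrossRel, Interleaves, not_or] at hcp
  constructor <;> rintro ⟨h, h'⟩ <;> constructor <;> grind

theorem fst_mem_Ioo_iff_of_interleaves {c p q : Fin n × Fin n} (hpq : Interleaves p q)
    (hp : p.1 ∈ Set.Ioo c.1 c.2 ↔ p.2 ∈ Set.Ioo c.1 c.2)
    (hq : q.1 ∈ Set.Ioo c.1 c.2 ↔ q.2 ∈ Set.Ioo c.1 c.2) :
    p.1 ∈ Set.Ioo c.1 c.2 ↔ q.1 ∈ Set.Ioo c.1 c.2 := by
  obtain ⟨h₁, h₂, h₃⟩ := hpq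
  exact ⟨fun h => Set.ordConnected_Ioo.out h (hp.1 h) ⟨h₁.le, h₂.le⟩,
    fun h => hp.2 (Set.ordConnected_Ioo.out h (hq.1 h) ⟨h₂.le, h₃.le⟩)⟩

/-- The arcs of the circle following the vertices `i` and `j` lie on the same side of every chord
of `D`. The arc following `i` is cut off by the chord `p` when `p.1 ≤ i < p.2`. -/
def Unseparated (D : Finset (Fin n × Fin n)) (i j : Fin n) : Prop :=
  ∀ p ∈ D, i ∈ Set.Ico p.1 p.2 ↔ j ∈ Set.Ico p.1 p.2

/-- The vertices whose following arc is separated from every other arc by some chord of `D`. -/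
def isolatedArcs (D : Finset (Fin n × Fin n)) : Set (Fin n) :=
  {i | ∀ j, Unseparated D i j → j = i}

end Crossing

namespace CircMatching

variable {n : ℕ} (M : CircMatching n)

/-- The chord through a vertex. -/
noncomputable def chordAt (v : Fin n) : M.chords :=
  ⟨(M.mem_unique v).choose, (M.mem_unique v).choose_spec.1.1⟩

theorem chordAt_fst_eq_or_snd_eq (v : Fin n) : (M.chordAt v).1.1 = v ∨ (M.chordAt v).1.2 = v :=
  (M.mem_unique v).choose_spec.1.2

variable {M} in
theorem chordAt_eq {p : M.chords} {v : Fin n} (h : p.1.1 = v ∨ p.1.2 = v) : M.chordAt v = p :=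
  Subtype.ext ((M.mem_unique v).unique
    ⟨(M.chordAt v).2, M.chordAt_fst_eq_or_snd_eq v⟩ ⟨p.2, h⟩)

theorem le_two_mul_card_chords : n ≤ 2 * M.chords.card := by
  have hsurj : Function.Surjective
      (Sum.elim (fun p => p.1.1) (fun p => p.1.2) : M.chords ⊕ M.chords → Fin n) := fun v =>
    (M.chordAt_fst_eq_or_snd_eq v).elim (fun h => ⟨.inl _, h⟩) (fun h => ⟨.inr _, h⟩)
  simpa [two_mul] using Fintype.card_le_of_surjective _ hsurj

theorem le_two_mul_crossNum_add_card_connectedComponent :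
    n ≤ 2 * (crossNum M.chords + Nat.card (crossGraph M.chords).ConnectedComponent) := by
  have hgraph := card_vert_le_card_edgeSet_add_card_connectedComponent (crossGraph M.chords)
  rw [Nat.card_eq_finsetCard] at hgraph
  have hchords := M.le_two_mul_card_chords
  have hedges := card_edgeSet_crossGraph_le_crossNum M.chords
  omega

variable {M} in
theorem card_connectedComponent_le_crossNum (hcore : IsCoreMatching M) :
    Nat.card (crossGraph M.chords).ConnectedComponent ≤ crossNum M.chords := by
  refine (card_connectedComponent_le_card_edgeSet fun p h => ?_).trans
    (card_edgeSet_crossGraph_le_crossNum M.chords)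
  obtain ⟨q, hq, hpq⟩ := hcore p.1 p.2
  exact h ⟨q, hq⟩ hpq

/-- The connected component of the crossing graph containing the chord through a vertex. -/
noncomputable def component (v : Fin n) : (crossGraph M.chords).ConnectedComponent :=
  (crossGraph M.chords).connectedComponentMk (M.chordAt v)

theorem component_fst (p : M.chords) :
    M.component p.1.1 = (crossGraph M.chords).connectedComponentMk p := by
  rw [component, chordAt_eq (.inl rfl)]

theorem component_snd (p : M.chords) :
    M.component p.1.2 = (crossGraph M.chords).connectedComponentMk p := by
  rw [component, chordAt_eq (.inr rfl)]

theorem component_surjective : Function.Surjective M.component :=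
  fun Y => Y.ind fun p => ⟨_, M.component_fst p⟩

variable {M}

theorem fst_mem_Ioo_iff_snd_mem_Ioo_of_component_ne {c p : M.chords}
    (h : (crossGraph M.chords).connectedComponentMk p ≠
      (crossGraph M.chords).connectedComponentMk c) :
    p.1.1 ∈ Set.Ioo c.1.1 c.1.2 ↔ p.1.2 ∈ Set.Ioo c.1.1 c.1.2 := by
  refine fst_mem_Ioo_iff_snd_mem_Ioo (M.lt p.1 p.2) (fun h₁ => h ?_) (fun h₂ => h ?_)
    fun hcp => h ?_
  · rw [← component_fst, h₁, component_fst]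
  · rw [← component_snd, h₂, component_snd]
  · exact (SimpleGraph.ConnectedComponent.sound
      (SimpleGraph.Adj.reachable (G := crossGraph M.chords) hcp)).symm

theorem fst_mem_Ioo_iff_of_reachable {c p q : M.chords}
    (hpq : (crossGraph M.chords).Reachable p q)
    (h : (crossGraph M.chords).connectedComponentMk p ≠
      (crossGraph M.chords).connectedComponentMk c) :
    p.1.1 ∈ Set.Ioo c.1.1 c.1.2 ↔ q.1.1 ∈ Set.Ioo c.1.1 c.1.2 := by
  obtain ⟨W⟩ := hpq
  induction W with
  | nil => rfl
  | cons hadj _ ih =>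
    have h' := SimpleGraph.ConnectedComponent.sound hadj.reachable ▸ h
    have hp := fst_mem_Ioo_iff_snd_mem_Ioo_of_component_ne h
    have hr := fst_mem_Ioo_iff_snd_mem_Ioo_of_component_ne h'
    refine Iff.trans ?_ (ih h')
    rcases hadj with hadj | hadj
    · exact fst_mem_Ioo_iff_of_interleaves hadj hp hr
    · exact (fst_mem_Ioo_iff_of_interleaves hadj hr hp).symm

theorem mem_Ioo_iff_of_component_eq {c : M.chords} {v w : Fin n}
    (hvw : M.component v = M.component w)
    (hv : M.component v ≠ (crossGraph M.chords).connectedComponentMk c) :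
    v ∈ Set.Ioo c.1.1 c.1.2 ↔ w ∈ Set.Ioo c.1.1 c.1.2 := by
  have hfst : ∀ u, M.component u ≠ (crossGraph M.chords).connectedComponentMk c →
      (u ∈ Set.Ioo c.1.1 c.1.2 ↔ (M.chordAt u).1.1 ∈ Set.Ioo c.1.1 c.1.2) := fun u hu => by
    rcases M.chordAt_fst_eq_or_snd_eq u with h | h
    · rw [h]
    · rw [fst_mem_Ioo_iff_snd_mem_Ioo_of_component_ne hu, h]
  rw [hfst v hv, hfst w (hvw ▸ hv)]
  exact fst_mem_Ioo_iff_of_reachable (SimpleGraph.ConnectedComponent.exact hvw) hv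

theorem unseparated_of_isLeast_of_isGreatest {Y : (crossGraph M.chords).ConnectedComponent}
    {i s u : Fin n} (hi : i ⋖ s) (hs : IsLeast (M.component ⁻¹' {Y}) s)
    (hu : IsGreatest (M.component ⁻¹' {Y}) u) : Unseparated M.chords i u := by
  intro p hp
  lift p to M.chords using hp
  have hsY : M.component s = Y := hs.1
  have huY : M.component u = Y := hu.1
  by_cases hpY : (crossGraph M.chords).connectedComponentMk p = Y
  · have hfst : s ≤ p.1.1 := hs.2 ((M.component_fst p).trans hpY)
    have hsnd : p.1.2 ≤ u := hu.2 ((M.component_snd p).trans hpY)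
    exact iff_of_false (fun h => (hi.lt.trans_le hfst).not_ge h.1) fun h => hsnd.not_gt h.2
  · have hne_fst : u ≠ p.1.1 := fun h => hpY (by rw [← component_fst, ← h, huY])
    have hne_snd : s ≠ p.1.2 := fun h => hpY (by rw [← component_snd, ← h, hsY])
    calc i ∈ Set.Ico p.1.1 p.1.2
      _ ↔ s ∈ Set.Ioo p.1.1 p.1.2 := by
        rw [Set.mem_Ico, Set.mem_Ioo, hi.lt_iff_le_left, hi.lt_iff_le_right, hne_snd.le_iff_lt]
      _ ↔ u ∈ Set.Ioo p.1.1 p.1.2 :=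
        mem_Ioo_iff_of_component_eq (hsY.trans huY.symm) (hsY ▸ Ne.symm hpY)
      _ ↔ u ∈ Set.Ico p.1.1 p.1.2 := by
        rw [Set.mem_Ico, Set.mem_Ioo, hne_fst.symm.le_iff_lt]

theorem exists_isLeast_isGreatest (Y : (crossGraph M.chords).ConnectedComponent) :
    ∃ s u, IsLeast (M.component ⁻¹' {Y}) s ∧ IsGreatest (M.component ⁻¹' {Y}) u := by
  have hne : (M.component ⁻¹' {Y}).Nonempty := M.component_surjective Y
  obtain ⟨s, hs⟩ := (Set.toFinite (M.component ⁻¹' {Y})).isCompact.exists_isLeast hne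
  obtain ⟨u, hu⟩ := (Set.toFinite (M.component ⁻¹' {Y})).isCompact.exists_isGreatest hne
  exact ⟨s, u, hs, hu⟩

theorem exists_component_eq_notMem_isolatedArcs
    [Nontrivial (crossGraph M.chords).ConnectedComponent]
    (Y : (crossGraph M.chords).ConnectedComponent) :
    ∃ v ∉ isolatedArcs M.chords, M.component v = Y := by
  obtain ⟨s, u, hs, hu⟩ := exists_isLeast_isGreatest Y
  by_cases hmin : IsMin s
  · -- `Y` contains vertex `0`, so no arc precedes it. The arc before the first vertex `t` outside
    -- `Y` follows a vertex of `Y` and is unseparated from the last arc of the component of `t`.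
    obtain ⟨Z, hZ⟩ := exists_ne Y
    obtain ⟨z, rfl⟩ := M.component_surjective Z
    obtain ⟨t, ht⟩ := (Set.toFinite {v | M.component v ≠ Y}).isCompact.exists_isLeast ⟨z, hZ⟩
    obtain ⟨i, hi⟩ := exists_covBy_of_wellFoundedGT (a := t) fun h =>
      ht.1 (h.eq_of_le (hmin.isBot t) ▸ hs.1)
    have hiY : M.component i = Y := by
      by_contra h
      exact hi.lt.not_ge (ht.2 h)
    obtain ⟨s', u', hs', hu'⟩ := exists_isLeast_isGreatest (M.component t)
    obtain rfl : s' = t := (hs'.2 rfl).antisymm (ht.2 (hs'.1.trans_ne ht.1))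
    refine ⟨i, fun h => ht.1 ?_, hiY⟩
    rw [← hu'.1, h u' (unseparated_of_isLeast_of_isGreatest hi hs' hu'), hiY]
  · obtain ⟨i, hi⟩ := exists_covBy_of_wellFoundedGT hmin
    refine ⟨u, fun h => (hi.lt.trans_le (hs.2 hu.1)).ne (h i fun p hp => ?_), hu.1⟩
    exact (unseparated_of_isLeast_of_isGreatest hi hs hu p hp).symm

theorem ncard_isolatedArcs_add_card_connectedComponent_le
    [Nontrivial (crossGraph M.chords).ConnectedComponent] :
    (isolatedArcs M.chords).ncard + Nat.card (crossGraph M.chords).ConnectedComponent ≤ n := by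
  have hsurj : Function.Surjective
      ((isolatedArcs M.chords)ᶜ.domRestrict M.component) := fun Y =>
    let ⟨v, hv, hvY⟩ := exists_component_eq_notMem_isolatedArcs Y
    ⟨⟨v, hv⟩, hvY⟩
  calc (isolatedArcs M.chords).ncard + Nat.card (crossGraph M.chords).ConnectedComponent
    _ ≤ (isolatedArcs M.chords).ncard + (isolatedArcs M.chords)ᶜ.ncard := by
      gcongr
      exact Nat.card_le_card_of_surjective _ hsurj
    _ = n := by rw [Set.ncard_add_ncard_compl, Nat.card_fin]

end CircMatching

section Circle

theorem exists_mem_Ico_exp_mul_I_eq {z : ℂ} (hz : ‖z‖ = 1) :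
    ∃ θ ∈ Set.Ico 0 (2 * Real.pi), Complex.exp (θ * Complex.I) = z := by
  obtain ⟨θ, hθ, harg⟩ := Circle.periodic_exp.exists_mem_Ico₀ Real.two_pi_pos z.arg
  refine ⟨θ, hθ, ?_⟩
  rw [← Circle.coe_exp, ← harg, Circle.coe_exp]
  simpa [hz] using Complex.norm_mul_exp_arg_mul_I z

/-- An affine function vanishing on the line through `exp (α * I)` and `exp (β * I)`, used to tell
the two sides of a chord apart. It is normalized so as to have the factorization
`secantSide_exp_mul_I` on the unit circle. -/
noncomputable def secantSide (α β : ℝ) : ℂ →ᵃ[ℝ] ℝ :=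
  AffineMap.const ℝ ℂ (Real.cos ((β - α) / 2)) -
    (Real.cos ((α + β) / 2) • Complex.reLm + Real.sin ((α + β) / 2) • Complex.imLm).toAffineMap

theorem secantSide_exp_mul_I (α β θ : ℝ) :
    secantSide α β (Complex.exp (θ * Complex.I)) =
      2 * Real.sin ((θ - α) / 2) * Real.sin ((θ - β) / 2) := by
  calc secantSide α β (Complex.exp (θ * Complex.I))
    _ = Real.cos ((β - α) / 2) - Real.cos (θ - (α + β) / 2) := by
      simp only [secantSide, AffineMap.coe_sub, AffineMap.coe_const, Pi.sub_apply,
        LinearMap.coe_toAffineMap, LinearMap.add_apply, LinearMap.smul_apply, Complex.reLm_coe,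
        Complex.imLm_coe, Complex.exp_ofReal_mul_I_re, Complex.exp_ofReal_mul_I_im, smul_eq_mul,
        Function.const_apply, Real.cos_sub θ]
      ring
    _ = 2 * Real.sin ((θ - α) / 2) * Real.sin ((θ - β) / 2) := by
      rw [Real.two_mul_sin_mul_sin]
      congr 2 <;> ring

theorem sin_half_sub_pos {α θ : ℝ} (h : α < θ) (h' : θ < α + 2 * Real.pi) :
    0 < Real.sin ((θ - α) / 2) :=
  Real.sin_pos_of_pos_of_lt_pi (by linarith) (by linarith)

theorem sin_half_sub_neg {α θ : ℝ} (h : θ < α) (h' : α < θ + 2 * Real.pi) :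
    Real.sin ((θ - α) / 2) < 0 :=
  Real.sin_neg_of_neg_of_neg_pi_lt (by linarith) (by linarith)

theorem secantSide_exp_mul_I_neg {α β θ : ℝ} (hα : α < θ) (hβ : θ < β)
    (hαβ : β ≤ α + 2 * Real.pi) : secantSide α β (Complex.exp (θ * Complex.I)) < 0 := by
  rw [secantSide_exp_mul_I]
  exact mul_neg_of_pos_of_neg
    (mul_pos two_pos (sin_half_sub_pos hα (hβ.trans_le hαβ)))
    (sin_half_sub_neg hβ (by linarith))

theorem secantSide_exp_mul_I_pos_of_lt_left {α β θ : ℝ} (hαβ : α ≤ β) (hα : θ < α)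
    (hβ : β < θ + 2 * Real.pi) : 0 < secantSide α β (Complex.exp (θ * Complex.I)) := by
  rw [secantSide_exp_mul_I]
  exact mul_pos_of_neg_of_neg
    (mul_neg_of_pos_of_neg two_pos (sin_half_sub_neg hα (hαβ.trans_lt hβ)))
    (sin_half_sub_neg (hα.trans_le hαβ) hβ)

theorem secantSide_exp_mul_I_pos_of_right_lt {α β θ : ℝ} (hαβ : α ≤ β) (hβ : β < θ)
    (hα : θ < α + 2 * Real.pi) : 0 < secantSide α β (Complex.exp (θ * Complex.I)) := by
  rw [secantSide_exp_mul_I]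
  exact mul_pos (mul_pos two_pos (sin_half_sub_pos (hαβ.trans_lt hβ) hα))
    (sin_half_sub_pos hβ (by linarith))

end Circle

section Arcs

variable {n : ℕ}

/-- The argument of the vertex labeled `j`, where `j = n` stands for a full turn. -/
noncomputable def vertexAngle (n j : ℕ) : ℝ := 2 * Real.pi * j / n

theorem vertexAngle_nonneg (n j : ℕ) : 0 ≤ vertexAngle n j := by
  unfold vertexAngle
  positivity

theorem vertexAngle_self [NeZero n] : vertexAngle n n = 2 * Real.pi :=
  mul_div_cancel_right₀ _ (NeZero.ne _)

theorem vertexAngle_mono (n : ℕ) : Monotone (vertexAngle n) := fun i j h => by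
  unfold vertexAngle
  gcongr

theorem circPt_eq_exp_vertexAngle (j : Fin n) :
    circPt n j = Complex.exp (vertexAngle n j * Complex.I) := by
  rw [circPt, vertexAngle]
  congr 1
  push_cast
  ring

/-- The open arc of the unit circle between the vertex labeled `j` and the next one. -/
def openArc (j : Fin n) : Set ℂ :=
  (fun θ : ℝ => Complex.exp (θ * Complex.I)) '' Set.Ioo (vertexAngle n j) (vertexAngle n (j + 1))

theorem openArc_nonempty (j : Fin n) : (openArc j).Nonempty := by
  have : NeZero n := j.neZero
  refine (Set.nonempty_Ioo.2 ?_).image _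
  unfold vertexAngle
  have := NeZero.pos n
  gcongr
  exact_mod_cast j.1.lt_succ_self

theorem openArc_subset_sphere (j : Fin n) : openArc j ⊆ Metric.sphere (0 : ℂ) 1 := by
  rintro _ ⟨θ, -, rfl⟩
  simp [Complex.norm_exp_ofReal_mul_I]

theorem exists_eq_circPt_or_mem_openArc [NeZero n] {z : ℂ} (hz : z ∈ Metric.sphere (0 : ℂ) 1) :
    ∃ j : Fin n, z = circPt n j ∨ z ∈ openArc j := by
  obtain ⟨θ, ⟨hθ₀, hθ⟩, rfl⟩ := exists_mem_Ico_exp_mul_I_eq (mem_sphere_zero_iff_norm.1 hz)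
  have hn : (0 : ℝ) < n := Nat.cast_pos.2 (NeZero.pos n)
  have hle {t : ℝ} : 2 * Real.pi * t / n ≤ θ ↔ t ≤ θ * n / (2 * Real.pi) := by
    rw [div_le_iff₀ hn, le_div_iff₀ Real.two_pi_pos, mul_comm t]
  have hfloor : ⌊θ * n / (2 * Real.pi)⌋₊ < n := by
    rw [Nat.floor_lt (by positivity), div_lt_iff₀ Real.two_pi_pos, mul_comm]
    gcongr
  refine ⟨⟨_, hfloor⟩, ?_⟩
  have hleft : vertexAngle n ⌊θ * n / (2 * Real.pi)⌋₊ ≤ θ :=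
    hle.2 (Nat.floor_le (by positivity))
  rcases hleft.eq_or_lt with h | h
  · exact .inl (by rw [circPt_eq_exp_vertexAngle, h])
  · refine .inr ⟨θ, ⟨h, lt_of_not_ge fun h' => ?_⟩, rfl⟩
    exact (Nat.lt_floor_add_one _).not_ge (by exact_mod_cast hle.1 h')

/-- The function `secantSide` of the chord `p`. For `p.1 < p.2` it is negative on the arcs that
lead from `p.1` to `p.2` and positive on the other ones. -/
noncomputable def chordSide (p : Fin n × Fin n) : ℂ →ᵃ[ℝ] ℝ :=
  secantSide (vertexAngle n p.1) (vertexAngle n p.2)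

theorem chordSide_eq_zero_of_mem_chordSeg {p : Fin n × Fin n} {z : ℂ} (hz : z ∈ chordSeg n p) :
    chordSide p z = 0 := by
  have hends : ∀ w ∈ ({circPt n p.1, circPt n p.2} : Set ℂ), chordSide p w = 0 := by
    simp [circPt_eq_exp_vertexAngle, chordSide, secantSide_exp_mul_I]
  exact ((convex_singleton (𝕜 := ℝ) 0).affine_preimage (chordSide p)).segment_subset
    (hends _ (.inl rfl)) (hends _ (.inr rfl)) hz

theorem vertexAngle_le_add_two_pi (i j : Fin n) :
    vertexAngle n (j + 1) ≤ vertexAngle n i + 2 * Real.pi := by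
  have : NeZero n := j.neZero
  have h := vertexAngle_mono n (Nat.succ_le_of_lt j.2)
  rw [vertexAngle_self] at h
  linarith [vertexAngle_nonneg n i]

theorem chordSide_neg_of_mem_openArc {p : Fin n × Fin n} {j : Fin n} {z : ℂ}
    (hz : z ∈ openArc j) (hj : j ∈ Set.Ico p.1 p.2) : chordSide p z < 0 := by
  obtain ⟨θ, ⟨h, h'⟩, rfl⟩ := hz
  exact secantSide_exp_mul_I_neg ((vertexAngle_mono n hj.1).trans_lt h)
    (h'.trans_le (vertexAngle_mono n hj.2))
    ((vertexAngle_mono n p.2.1.le_succ).trans (vertexAngle_le_add_two_pi _ _))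

theorem chordSide_pos_of_mem_openArc {p : Fin n × Fin n} (hp : p.1 ≤ p.2) {j : Fin n} {z : ℂ}
    (hz : z ∈ openArc j) (hj : j ∉ Set.Ico p.1 p.2) : 0 < chordSide p z := by
  obtain ⟨θ, ⟨h, h'⟩, rfl⟩ := hz
  rw [Set.mem_Ico, not_and_or, not_le, not_lt] at hj
  rcases hj with hj | hj
  · refine secantSide_exp_mul_I_pos_of_lt_left (vertexAngle_mono n hp)
      (h'.trans_le (vertexAngle_mono n hj)) ?_
    linarith [vertexAngle_mono n p.2.1.le_succ, vertexAngle_le_add_two_pi j p.2]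
  · exact secantSide_exp_mul_I_pos_of_right_lt (vertexAngle_mono n hp)
      ((vertexAngle_mono n hj).trans_lt h) (h'.trans_le (vertexAngle_le_add_two_pi _ _))

end Arcs

section Regions

variable {n : ℕ} {D : Finset (Fin n × Fin n)} {C : Set ℂ}

theorem segment_subset_diskComplement (hD : ∀ p ∈ D, p.1 ≤ p.2) {i j : Fin n}
    (hij : Unseparated D i j) {x y : ℂ} (hx : x ∈ openArc i) (hy : y ∈ openArc j) :
    segment ℝ x y ⊆ diskComplement D := by
  refine fun z hz => ⟨?_, fun hzD => ?_⟩
  · exact (convex_closedBall (0 : ℂ) 1).segment_subset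
      (Metric.sphere_subset_closedBall (openArc_subset_sphere i hx))
      (Metric.sphere_subset_closedBall (openArc_subset_sphere j hy)) hz
  obtain ⟨p, hp, hzp⟩ := Set.mem_iUnion₂.1 hzD
  have hz₀ := chordSide_eq_zero_of_mem_chordSeg hzp
  by_cases hi : i ∈ Set.Ico p.1 p.2
  · have hneg : segment ℝ x y ⊆ chordSide p ⁻¹' Set.Iio 0 :=
      ((convex_Iio 0).affine_preimage (chordSide p)).segment_subset
        (chordSide_neg_of_mem_openArc hx hi)
        (chordSide_neg_of_mem_openArc hy ((hij p hp).1 hi))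
    exact (hneg hz).ne hz₀
  · have hpos : segment ℝ x y ⊆ chordSide p ⁻¹' Set.Ioi 0 :=
      ((convex_Ioi 0).affine_preimage (chordSide p)).segment_subset
        (chordSide_pos_of_mem_openArc (hD p hp) hx hi)
        (chordSide_pos_of_mem_openArc (hD p hp) hy (mt (hij p hp).2 hi))
    exact (hpos hz).ne' hz₀

theorem eq_connectedComponentIn_of_mem_regions (hC : C ∈ regions D) {x : ℂ} (hx : x ∈ C) :
    C = connectedComponentIn (diskComplement D) x := by
  obtain ⟨w, -, rfl⟩ := hC
  exact connectedComponentIn_eq hx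

theorem subset_diskComplement_of_mem_regions (hC : C ∈ regions D) : C ⊆ diskComplement D := by
  obtain ⟨w, -, rfl⟩ := hC
  exact connectedComponentIn_subset _ _

theorem openArc_subset_of_unseparated (hD : ∀ p ∈ D, p.1 ≤ p.2) (hC : C ∈ regions D)
    {i j : Fin n} (hij : Unseparated D i j) (hi : (C ∩ openArc i).Nonempty) :
    openArc j ⊆ C := by
  obtain ⟨x, hxC, hx⟩ := hi
  intro y hy
  rw [eq_connectedComponentIn_of_mem_regions hC hxC]
  exact (convex_segment x y).isPreconnected.subset_connectedComponentIn
    (left_mem_segment ℝ x y) (segment_subset_diskComplement hD hij hx hy)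
    (right_mem_segment ℝ x y)

theorem circPt_notMem_diskComplement {v : Fin n} (hv : ∃ p ∈ D, p.1 = v ∨ p.2 = v) :
    circPt n v ∉ diskComplement D := by
  obtain ⟨p, hp, rfl | rfl⟩ := hv
  · exact fun h => h.2 (Set.mem_biUnion hp (left_mem_segment ℝ _ _))
  · exact fun h => h.2 (Set.mem_biUnion hp (right_mem_segment ℝ _ _))

theorem exists_mem_openArc [NeZero n] (hcov : ∀ v, ∃ p ∈ D, p.1 = v ∨ p.2 = v) {z : ℂ}
    (hz : z ∈ diskComplement D) (hz₁ : z ∈ Metric.sphere (0 : ℂ) 1) :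
    ∃ j : Fin n, z ∈ openArc j := by
  obtain ⟨j, rfl | hj⟩ := exists_eq_circPt_or_mem_openArc (n := n) hz₁
  · exact absurd hz (circPt_notMem_diskComplement (hcov j))
  · exact ⟨j, hj⟩

theorem eq_of_isPreconnected_of_inter_openArc (hcov : ∀ v, ∃ p ∈ D, p.1 = v ∨ p.2 = v)
    (hC : C ⊆ diskComplement D) (hpre : IsPreconnected (C ∩ Metric.sphere (0 : ℂ) 1))
    {i j : Fin n} (hi : (C ∩ openArc i).Nonempty) (hj : (C ∩ openArc j).Nonempty) : i = j := by
  wlog hij : i < j generalizing i j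
  · exact (not_lt.1 hij).eq_or_lt.elim Eq.symm fun h => (this hj hi h).symm
  have : NeZero n := i.neZero
  obtain ⟨x, hxC, hx⟩ := hi
  obtain ⟨y, hyC, hy⟩ := hj
  obtain ⟨z, ⟨hzC, hz⟩, hz₀⟩ := hpre.intermediate_value
    ⟨hxC, openArc_subset_sphere i hx⟩ ⟨hyC, openArc_subset_sphere j hy⟩
    (chordSide (i, j)).continuous_of_finiteDimensional.continuousOn
    ⟨(chordSide_neg_of_mem_openArc hx ⟨le_rfl, hij⟩).le,
      (chordSide_pos_of_mem_openArc hij.le hy fun h => h.2.false).le⟩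
  obtain ⟨k, hk⟩ := exists_mem_openArc hcov (hC hzC) hz
  by_cases hkij : k ∈ Set.Ico i j
  · exact absurd hz₀ (chordSide_neg_of_mem_openArc (p := (i, j)) hk hkij).ne
  · exact absurd hz₀ (chordSide_pos_of_mem_openArc (p := (i, j)) hij.le hk hkij).ne'

theorem nonempty_and_isPreconnected_of_arcCount_eq_one (h : arcCount C = 1) :
    (C ∩ Metric.sphere (0 : ℂ) 1).Nonempty ∧ IsPreconnected (C ∩ Metric.sphere (0 : ℂ) 1) := by
  obtain ⟨hsub, ⟨c⟩⟩ := Nat.card_eq_one_iff_unique.1 h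
  obtain ⟨⟨z, hz⟩, -⟩ := ConnectedComponents.surjective_coe c
  refine ⟨⟨z, hz⟩, ?_⟩
  rw [isPreconnected_iff_preconnectedSpace, preconnectedSpace_iff_connectedComponent]
  exact fun x => Set.eq_univ_of_forall fun y =>
    ConnectedComponents.coe_eq_coe'.1 (Subsingleton.elim _ _)

theorem exists_mem_isolatedArcs_inter_openArc_nonempty [NeZero n] (hD : ∀ p ∈ D, p.1 ≤ p.2)
    (hcov : ∀ v, ∃ p ∈ D, p.1 = v ∨ p.2 = v) (hC : C ∈ regions D) (h : arcCount C = 1) :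
    ∃ j ∈ isolatedArcs D, (C ∩ openArc j).Nonempty := by
  obtain ⟨⟨z, hzC, hz⟩, hpre⟩ := nonempty_and_isPreconnected_of_arcCount_eq_one h
  have hCD := subset_diskComplement_of_mem_regions hC
  obtain ⟨j, hj⟩ := exists_mem_openArc hcov (hCD hzC) hz
  refine ⟨j, fun k hjk => ?_, z, hzC, hj⟩
  have hk : openArc k ⊆ C := openArc_subset_of_unseparated hD hC hjk ⟨z, hzC, hj⟩
  exact eq_of_isPreconnected_of_inter_openArc hcov hCD hpre
    ((openArc_nonempty k).mono (Set.subset_inter hk subset_rfl)) ⟨z, hzC, hj⟩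

theorem eq_of_mem_regions_of_inter_openArc (hD : ∀ p ∈ D, p.1 ≤ p.2) {C' : Set ℂ}
    (hC : C ∈ regions D) (hC' : C' ∈ regions D) {j : Fin n} (hj : (C ∩ openArc j).Nonempty)
    (hj' : (C' ∩ openArc j).Nonempty) : C = C' := by
  obtain ⟨z, hzC, hz⟩ := hj
  have hzC' : z ∈ C' := openArc_subset_of_unseparated hD hC' (fun _ _ => Iff.rfl) hj' hz
  rw [eq_connectedComponentIn_of_mem_regions hC hzC,
    eq_connectedComponentIn_of_mem_regions hC' hzC']

theorem nReg_one_le_ncard_isolatedArcs [NeZero n] (hD : ∀ p ∈ D, p.1 ≤ p.2)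
    (hcov : ∀ v, ∃ p ∈ D, p.1 = v ∨ p.2 = v) : nReg D 1 ≤ (isolatedArcs D).ncard := by
  choose arc harc hCarc using fun C : {C : Set ℂ // C ∈ regions D ∧ arcCount C = 1} =>
    exists_mem_isolatedArcs_inter_openArc_nonempty hD hcov C.2.1 C.2.2
  refine Nat.card_le_card_of_injective (fun C => (⟨arc C, harc C⟩ : isolatedArcs D))
    fun C C' h => Subtype.ext ?_
  have h' : arc C = arc C' := congrArg Subtype.val h
  exact eq_of_mem_regions_of_inter_openArc hD C.2.1 C'.2.1 (hCarc C) (h' ▸ hCarc C')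

end Regions

/-- For any core matching `K` with `k(K) ≥ 1` crossings, the number `n₁(K)` of
regions of `K` with exactly one boundary arc satisfies `n₁(K) ≤ 3 k(K) + 1`,
with equality only when `k(K) = 1`. -/
theorem coreMatching_nReg_one_le {n k : ℕ} (M : CircMatching n)
    (hcore : IsCoreMatching M) (hk : crossNum M.chords = k) (hk1 : 1 ≤ k) :
    nReg M.chords 1 ≤ 3 * k + 1 ∧ (nReg M.chords 1 = 3 * k + 1 → k = 1) := by
  have hn : NeZero n := by
    obtain ⟨pq, -⟩ := Finset.card_pos.1 (hk1.trans_eq hk.symm)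
    exact pq.1.1.neZero
  have hregions : nReg M.chords 1 ≤ (isolatedArcs M.chords).ncard :=
    nReg_one_le_ncard_isolatedArcs (fun p hp => (M.lt p hp).le) fun v => (M.mem_unique v).exists
  have hvertices := M.le_two_mul_crossNum_add_card_connectedComponent
  have hcomponents := CircMatching.card_connectedComponent_le_crossNum hcore
  rcases le_or_gt (Nat.card (crossGraph M.chords).ConnectedComponent) 1 with hone | hmany
  · have hisolated := Set.ncard_le_card (isolatedArcs M.chords)
    rw [Nat.card_fin] at hisolated
    omega
  · have := Finite.one_lt_card_iff_nontrivial.1 hmany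
    have hisolated := CircMatching.ncard_isolatedArcs_add_card_connectedComponent_le (M := M)
    omega
end

section
/- Touchard–Riordan formula: for every m ≥ 0, the polynomial Σ_M z^{cr(M)}, summed over all perfect matchings M of 2m points on a circle where cr(M) is the number of crossings of M, equals (1/(1−z)^m) · Σ_{k=−m}^{m} (−1)^k binom(2m, m+k) z^{binom(k,2)}. -/
noncomputable instance (n : ℕ) : Fintype (CircMatching n) :=
  Fintype.ofInjective CircMatching.chords (fun a b h => by cases a; cases b; simpa using h)

open Polynomial

/-!
Scan the points in increasing order and let each point whose chord is still open emit a ray. If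
`T n h` is the crossing generating function of the states reached after `n` points with `h` rays,
then `T (n + 1) h = T n (h - 1) + [h + 1]_q * T n (h + 1)`: a new point either emits a ray or closes
one, and closing a ray crosses exactly the rays that start to its right.

Up to a power of `1 - q` this is the three-term recurrence of the continuous `q`-Hermite
polynomials `H_h`, so `(1 - q) ^ r * T (h + 2 * r) h` is the coefficient of `H_h` in
`(2x)^(h + 2r)`. To compute it, expand powers in Chebyshev polynomials, which gives ballot numbers,
and Chebyshev polynomials in the `H_h`, which gives signed Gaussian binomials. For `h = 0` the
Gaussian binomials are `1`, and writing each ballot number as a difference of two binomial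
coefficients unfolds the sum over `0 ≤ k ≤ m` into a sum over `-m ≤ k ≤ m`.
-/

section TouchardRiordan

open Finset

section GaussBinom

variable {R : Type*} [Semiring R] (q : R)

/-- The Gaussian binomial coefficient `[n choose k]` at `q`, defined by the `q`-Pascal rule. -/
def gaussBinom : ℕ → ℕ → R
  | _, 0 => 1
  | 0, _ + 1 => 0
  | n + 1, k + 1 => gaussBinom n k + q ^ (k + 1) * gaussBinom n (k + 1)

@[simp]
lemma gaussBinom_zero_right (n : ℕ) : gaussBinom q n 0 = 1 := by
  cases n <;> rfl

lemma gaussBinom_succ_succ (n k : ℕ) :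
    gaussBinom q (n + 1) (k + 1) = gaussBinom q n k + q ^ (k + 1) * gaussBinom q n (k + 1) :=
  rfl

lemma gaussBinom_eq_zero_of_lt {n k : ℕ} (h : n < k) : gaussBinom q n k = 0 := by
  induction n generalizing k with
  | zero => cases k with
    | zero => omega
    | succ k => rfl
  | succ n ih => cases k with
    | zero => omega
    | succ k => simp [gaussBinom_succ_succ, ih (show n < k by omega), ih (show n < k + 1 by omega)]

@[simp]
lemma gaussBinom_self (n : ℕ) : gaussBinom q n n = 1 := by
  induction n with
  | zero => rfl
  | succ n ih => simp [gaussBinom_succ_succ, ih, gaussBinom_eq_zero_of_lt]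

end GaussBinom

section HermiteCoeff

variable {R : Type*} [CommRing R] (q : R)

lemma one_sub_pow_mul_gaussBinom_succ (h k : ℕ) :
    (1 - q ^ (h + 1)) * gaussBinom q (h + k + 1) k =
      (1 - q ^ (h + k + 1)) * gaussBinom q (h + k) k := by
  induction k generalizing h with
  | zero => simp
  | succ k ihk =>
    induction h with
    | zero =>
      have := ihk 0
      simp only [zero_add, gaussBinom_self] at this ⊢
      rw [gaussBinom_succ_succ, gaussBinom_self]
      linear_combination this
    | succ h ihh =>
      have hk := ihk (h + 1)
      have pascal := gaussBinom_succ_succ q (h + k + 1) k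
      rw [show h + 1 + (k + 1) = h + k + 1 + 1 by ring, gaussBinom_succ_succ]
      rw [show h + 1 + k = h + k + 1 by ring] at hk
      rw [show h + (k + 1) = h + k + 1 by ring] at ihh
      linear_combination hk - (1 - q ^ (h + k + 2)) * pascal + q ^ (k + 1) * ihh

lemma one_sub_pow_mul_gaussBinom_succ_right (h k : ℕ) :
    (1 - q ^ (k + 1)) * gaussBinom q (h + k + 1) (k + 1) =
      (1 - q ^ (h + 1)) * gaussBinom q (h + k + 1) k := by
  have key := one_sub_pow_mul_gaussBinom_succ q h (k + 1)
  rw [← add_assoc, gaussBinom_succ_succ] at key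
  linear_combination -key

/-- The coefficient of the continuous `q`-Hermite polynomial `H_h` in the Chebyshev polynomial
`U_{h + 2k}` of the second kind. Indexing by the half-difference `k` of the degrees avoids
subtraction. -/
def hermiteCoeff (h k : ℕ) : R :=
  (-1) ^ k * q ^ (k + 1).choose 2 * gaussBinom q (h + k) k

@[simp]
lemma hermiteCoeff_zero_right (h : ℕ) : hermiteCoeff q h 0 = 1 := by
  simp [hermiteCoeff]

lemma hermiteCoeff_zero_left (k : ℕ) : hermiteCoeff q 0 k = (-1) ^ k * q ^ (k + 1).choose 2 := by
  simp [hermiteCoeff]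

lemma hermiteCoeff_zero_add_succ (k : ℕ) :
    hermiteCoeff q 0 k + hermiteCoeff q 0 (k + 1) = (1 - q) * hermiteCoeff q 1 k := by
  have exchange := one_sub_pow_mul_gaussBinom_succ_right q 0 k
  have exponent : (k + 1 + 1).choose 2 = k + 1 + (k + 1).choose 2 := by
    rw [Nat.choose_succ_succ, Nat.choose_one_right]
  simp only [zero_add, gaussBinom_self, mul_one] at exchange
  rw [hermiteCoeff_zero_left, hermiteCoeff_zero_left, hermiteCoeff, exponent, add_comm 1 k]
  linear_combination (-1) ^ k * q ^ (k + 1).choose 2 * exchange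

lemma hermiteCoeff_succ_add_succ (h k : ℕ) :
    hermiteCoeff q (h + 1) k + hermiteCoeff q (h + 1) (k + 1) =
      hermiteCoeff q h (k + 1) + (1 - q ^ (h + 2)) * hermiteCoeff q (h + 2) k := by
  have exchange := one_sub_pow_mul_gaussBinom_succ_right q (h + 1) k
  have pascal := gaussBinom_succ_succ q (h + k + 1) k
  have exponent : (k + 1 + 1).choose 2 = k + 1 + (k + 1).choose 2 := by
    rw [Nat.choose_succ_succ, Nat.choose_one_right]
  rw [show h + 1 + k + 1 = h + k + 2 by ring] at exchange
  simp only [hermiteCoeff, exponent]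
  rw [show h + 1 + (k + 1) = h + k + 2 by ring, show h + 1 + k = h + k + 1 by ring,
    show h + (k + 1) = h + k + 1 by ring, show h + 2 + k = h + k + 2 by ring]
  linear_combination (-1) ^ k * q ^ (k + 1).choose 2 * (exchange - pascal)

end HermiteCoeff

/-- The ballot number: how many `±1` walks of length `n` from the origin have `r` down-steps and
never become negative, for `2 * r ≤ n + 1`. It is also the coefficient of the Chebyshev polynomial
`U_{n - 2r}` in `(2x)^n`. -/
def ballotNum (n : ℕ) : ℕ → ℤ
  | 0 => 1
  | r + 1 => n.choose (r + 1) - n.choose r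

@[simp]
lemma ballotNum_zero_right (n : ℕ) : ballotNum n 0 = 1 := rfl

lemma ballotNum_succ_succ (n r : ℕ) :
    ballotNum (n + 1) (r + 1) = ballotNum n r + ballotNum n (r + 1) := by
  cases r with
  | zero => simp [ballotNum]
  | succ r =>
    simp only [ballotNum, Nat.choose_succ_succ]
    push_cast
    ring

lemma ballotNum_two_mul_add_one (r : ℕ) : ballotNum (2 * r + 1) (r + 1) = 0 := by
  simp [ballotNum, Nat.choose_symm_half]

lemma ballotNum_eq_choose_sub_choose {n r : ℕ} (h : r ≤ n) :
    ballotNum n r = n.choose r - n.choose (n + 1 - r) := by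
  cases r with
  | zero => simp
  | succ r => rw [ballotNum, Nat.add_sub_add_right, Nat.choose_symm (by omega)]

section BallotSum

variable {R : Type*} [CommRing R] (q : R)

lemma sum_antidiagonal_mul_ballotNum_succ (f : ℕ → R) (n r : ℕ) :
    ∑ x ∈ antidiagonal (r + 1), f x.1 * ballotNum (n + 1) x.2 =
      f 0 * ballotNum n (r + 1) +
        ∑ x ∈ antidiagonal r, (f x.1 + f (x.1 + 1)) * ballotNum n x.2 := by
  have peel_fst := Nat.sum_antidiagonal_succ (f := fun x => f x.1 * (ballotNum n x.2 : R)) (n := r)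
  have peel_snd := Nat.sum_antidiagonal_succ' (f := fun x => f x.1 * (ballotNum n x.2 : R)) (n := r)
  simp only [Nat.sum_antidiagonal_succ', ballotNum_succ_succ, ballotNum_zero_right, Int.cast_add,
    mul_add, add_mul, sum_add_distrib] at peel_fst peel_snd ⊢
  linear_combination peel_fst

/-- The coefficient of the continuous `q`-Hermite polynomial `H_h` in `(2x)^(h + 2r)`, obtained by
expanding through the Chebyshev polynomials of the second kind. -/
def ballotSum (h r : ℕ) : R :=
  ∑ x ∈ antidiagonal r, hermiteCoeff q h x.1 * ballotNum (h + 2 * r) x.2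

@[simp]
lemma ballotSum_zero_right (h : ℕ) : ballotSum q h 0 = 1 := by
  simp [ballotSum]

lemma ballotSum_zero_succ (r : ℕ) : ballotSum q 0 (r + 1) = (1 - q) * ballotSum q 1 r := by
  rw [ballotSum, show 0 + 2 * (r + 1) = 2 * r + 1 + 1 by ring, sum_antidiagonal_mul_ballotNum_succ,
    ballotNum_two_mul_add_one, ballotSum, mul_sum, add_comm 1]
  simp only [hermiteCoeff_zero_add_succ, Int.cast_zero, mul_zero, zero_add, mul_assoc]

lemma ballotSum_succ_succ (h r : ℕ) :
    ballotSum q (h + 1) (r + 1) =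
      ballotSum q h (r + 1) + (1 - q ^ (h + 2)) * ballotSum q (h + 2) r := by
  rw [ballotSum, show h + 1 + 2 * (r + 1) = h + 2 * (r + 1) + 1 by ring,
    sum_antidiagonal_mul_ballotNum_succ, ballotSum, Nat.sum_antidiagonal_succ, ballotSum, mul_sum,
    show h + 2 + 2 * r = h + 2 * (r + 1) by ring, add_assoc, ← sum_add_distrib]
  simp only [hermiteCoeff_succ_add_succ, hermiteCoeff_zero_right, add_mul, mul_assoc]

lemma toNat_succ_mul_self_div_two (k : ℕ) : (((k : ℤ) + 1) * k / 2).toNat = (k + 1).choose 2 := by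
  rw [Nat.choose_two_right, Nat.add_sub_cancel]
  norm_cast

lemma sum_range_two_mul_succ_eq_sum_antidiagonal {M : Type*} [AddCommMonoid M] (f : ℕ → M)
    (m : ℕ) :
    ∑ j ∈ range (2 * (m + 1)), f j = ∑ x ∈ antidiagonal m, (f x.2 + f (m + 1 + x.1)) := by
  rw [two_mul, sum_range_add, sum_add_distrib,
    Nat.sum_antidiagonal_eq_sum_range_succ (fun k _ => f (m + 1 + k)),
    Nat.antidiagonal_eq_map', sum_map]
  rfl

lemma ballotSum_zero_left (m : ℕ) :
    ballotSum q 0 m =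
      ∑ j ∈ range (2 * m + 1), (-1) ^ (j + m) * ((2 * m).choose j : R) *
        q ^ ((((j : ℤ) - m) * ((j : ℤ) - m - 1) / 2).toNat) := by
  -- The reflection `j ↦ 2m + 1 - j` fixes the exponent and flips the sign; the extra term
  -- `j = 2m + 1` is the partner of `j = 0`.
  have last_eq_zero : (-1) ^ (2 * m + 1 + m) * ((2 * m).choose (2 * m + 1) : R) *
      q ^ ((((2 * m + 1 : ℕ) - m : ℤ) * ((2 * m + 1 : ℕ) - m - 1) / 2).toNat) = 0 := by
    simp
  rw [← add_zero (∑ j ∈ _, _), ← last_eq_zero, ← sum_range_succ,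
    show 2 * m + 1 + 1 = 2 * (m + 1) by ring, sum_range_two_mul_succ_eq_sum_antidiagonal, ballotSum]
  refine sum_congr rfl fun ⟨k, j⟩ hkj => ?_
  obtain rfl : k + j = m := mem_antidiagonal.1 hkj
  have left_exponent : ((j : ℤ) - (k + j : ℕ)) * ((j : ℤ) - (k + j : ℕ) - 1) = (k + 1) * k := by
    push_cast; ring
  have right_exponent : (((k + j + 1 + k : ℕ) : ℤ) - (k + j : ℕ)) *
      (((k + j + 1 + k : ℕ) : ℤ) - (k + j : ℕ) - 1) = (k + 1) * k := by
    push_cast; ring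
  have left_sign : (-1 : R) ^ (j + (k + j)) = (-1) ^ k := by
    rw [show j + (k + j) = 2 * j + k by ring, pow_add, pow_mul, neg_one_sq, one_pow, one_mul]
  have right_sign : (-1 : R) ^ (k + j + 1 + k + (k + j)) = - (-1) ^ k := by
    rw [show k + j + 1 + k + (k + j) = 2 * (k + j) + (k + 1) by ring, pow_add, pow_mul, neg_one_sq,
      one_pow, one_mul, pow_succ, mul_neg_one]
  dsimp only
  rw [left_exponent, right_exponent, left_sign, right_sign, toNat_succ_mul_self_div_two,
    hermiteCoeff_zero_left, zero_add, ballotNum_eq_choose_sub_choose (by omega),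
    show 2 * (k + j) + 1 - j = k + j + 1 + k by omega]
  push_cast
  ring

end BallotSum

/-- `D` is a partial matching of the points `0, …, n - 1`: a set of pairwise disjoint chords, each
recorded with increasing endpoints. Natural numbers rather than `Fin n` serve as points, so that
the same `D` can be regarded as a matching of more points. -/
structure IsPartialMatching (n : ℕ) (D : Finset (ℕ × ℕ)) : Prop where
  fst_lt_snd : ∀ p ∈ D, p.1 < p.2
  snd_lt : ∀ p ∈ D, p.2 < n
  pairwiseDisjoint : (D : Set (ℕ × ℕ)).PairwiseDisjoint fun p => ({p.1, p.2} : Finset ℕ)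

/-- The points of `0, …, n - 1` lying on no chord of `D`. -/
def openPoints (n : ℕ) (D : Finset (ℕ × ℕ)) : Finset ℕ :=
  {v ∈ range n | ∀ p ∈ D, v ≠ p.1 ∧ v ≠ p.2}

lemma mem_openPoints {n v : ℕ} {D : Finset (ℕ × ℕ)} :
    v ∈ openPoints n D ↔ v < n ∧ ∀ p ∈ D, v ≠ p.1 ∧ v ≠ p.2 := by
  simp [openPoints]

lemma openPoints_insert_chord (n s : ℕ) (D : Finset (ℕ × ℕ)) :
    openPoints (n + 1) (insert (s, n) D) = (openPoints n D).erase s := by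
  ext v
  simp only [mem_erase, mem_openPoints, forall_mem_insert]
  grind

namespace IsPartialMatching

variable {n s : ℕ} {D : Finset (ℕ × ℕ)}

lemma succ (hD : IsPartialMatching n D) : IsPartialMatching (n + 1) D where
  fst_lt_snd := hD.fst_lt_snd
  snd_lt p hp := Nat.lt_succ_of_lt (hD.snd_lt p hp)
  pairwiseDisjoint := hD.pairwiseDisjoint

lemma of_succ (hD : IsPartialMatching (n + 1) D) (hn : ∀ s, (s, n) ∉ D) :
    IsPartialMatching n D where
  fst_lt_snd := hD.fst_lt_snd
  snd_lt p hp := (Nat.lt_succ_iff.1 (hD.snd_lt p hp)).lt_of_ne fun h => hn p.1 (h ▸ hp)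
  pairwiseDisjoint := hD.pairwiseDisjoint

lemma mk_notMem (hD : IsPartialMatching n D) (s : ℕ) : (s, n) ∉ D :=
  fun h => (hD.snd_lt _ h).false

lemma insert_chord (hD : IsPartialMatching n D) (hs : s ∈ openPoints n D) :
    IsPartialMatching (n + 1) (insert (s, n) D) where
  fst_lt_snd := by
    have := (mem_openPoints.1 hs).1
    simpa [this] using hD.fst_lt_snd
  snd_lt := by simpa using hD.succ.snd_lt
  pairwiseDisjoint := by
    rw [coe_insert, Set.pairwiseDisjoint_insert_of_notMem (mod_cast hD.mk_notMem s)]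
    refine ⟨hD.pairwiseDisjoint, fun p hp => ?_⟩
    have := (mem_openPoints.1 hs).2 p hp
    have := hD.fst_lt_snd p hp
    have := hD.snd_lt p hp
    simp only [disjoint_insert_left, disjoint_singleton_left, mem_insert, mem_singleton]
    omega

lemma disjoint_of_mem_erase {p q : ℕ × ℕ} (hD : IsPartialMatching n D) (hp : p ∈ D)
    (hq : q ∈ D.erase p) : Disjoint ({q.1, q.2} : Finset ℕ) {p.1, p.2} :=
  hD.pairwiseDisjoint (mem_of_mem_erase hq) hp (ne_of_mem_erase hq)

lemma erase_chord (hD : IsPartialMatching (n + 1) D) (hs : (s, n) ∈ D) :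
    IsPartialMatching n (D.erase (s, n)) where
  fst_lt_snd p hp := hD.fst_lt_snd p (mem_of_mem_erase hp)
  snd_lt p hp := by
    have := hD.snd_lt p (mem_of_mem_erase hp)
    have := hD.disjoint_of_mem_erase hs hp
    simp only [disjoint_insert_left, disjoint_singleton_left, mem_insert, mem_singleton] at this
    omega
  pairwiseDisjoint := hD.pairwiseDisjoint.subset (mod_cast erase_subset _ _)

lemma mem_openPoints_erase_chord (hD : IsPartialMatching (n + 1) D) (hs : (s, n) ∈ D) :
    s ∈ openPoints n (D.erase (s, n)) := by
  refine mem_openPoints.2 ⟨hD.fst_lt_snd _ hs, fun p hp => ?_⟩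
  have := hD.disjoint_of_mem_erase hs hp
  simp only [disjoint_insert_left, disjoint_singleton_left, mem_insert, mem_singleton] at this
  omega

lemma openPoints_succ (hD : IsPartialMatching n D) :
    openPoints (n + 1) D = insert n (openPoints n D) := by
  ext v
  have fst_lt := hD.fst_lt_snd
  have snd_lt := hD.snd_lt
  simp only [mem_insert, mem_openPoints]
  grind

end IsPartialMatching

open scoped Classical in
/-- The set of all partial matchings of `0, …, n - 1`. -/
noncomputable def partialMatchings (n : ℕ) : Finset (Finset (ℕ × ℕ)) :=
  {D ∈ (range n ×ˢ range n).powerset | IsPartialMatching n D}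

lemma mem_partialMatchings {n : ℕ} {D : Finset (ℕ × ℕ)} :
    D ∈ partialMatchings n ↔ IsPartialMatching n D := by
  simp only [partialMatchings, mem_filter, mem_powerset, and_iff_right_iff_imp]
  intro hD p hp
  have := hD.snd_lt p hp
  simpa [this] using (hD.fst_lt_snd p hp).trans this

@[simp]
lemma partialMatchings_zero : partialMatchings 0 = {∅} := by
  ext D
  rw [mem_partialMatchings, mem_singleton]
  constructor
  · exact fun hD => eq_empty_of_forall_notMem fun p hp => Nat.not_lt_zero _ (hD.snd_lt p hp)
  · rintro rfl
    constructor <;> simp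

lemma sum_partialMatchings_succ {M : Type*} [AddCommMonoid M] (f : Finset (ℕ × ℕ) → M) (n : ℕ) :
    ∑ D ∈ partialMatchings (n + 1), f D =
      ∑ D ∈ partialMatchings n, f D +
        ∑ D ∈ partialMatchings n, ∑ s ∈ openPoints n D, f (insert (s, n) D) := by
  classical
  rw [← sum_filter_not_add_sum_filter _ fun D => ∃ s, (s, n) ∈ D]
  congr 1
  · refine sum_congr (Finset.ext fun D => ?_) fun _ _ => rfl
    simp only [mem_filter, mem_partialMatchings, not_exists]
    exact ⟨fun ⟨hD, hn⟩ => hD.of_succ hn, fun hD => ⟨hD.succ, hD.mk_notMem⟩⟩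
  · rw [sum_sigma']
    symm
    refine sum_bij (fun x _ => insert (x.2, n) x.1) ?_ ?_ ?_ fun _ _ => rfl
    · rintro ⟨D, s⟩ hx
      rw [mem_sigma, mem_partialMatchings] at hx
      exact mem_filter.2 ⟨mem_partialMatchings.2 (hx.1.insert_chord hx.2), s, mem_insert_self _ _⟩
    · rintro ⟨D, s⟩ hD ⟨D', s'⟩ hD' h
      simp only [mem_sigma, mem_partialMatchings] at hD hD'
      obtain rfl : s = s' := by
        have : (s, n) ∈ insert (s', n) D' := h ▸ mem_insert_self _ _
        simpa [hD'.1.mk_notMem] using this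
      obtain rfl : D = D' := by
        rw [← erase_insert (hD.1.mk_notMem s), h, erase_insert (hD'.1.mk_notMem s)]
      rfl
    · intro D hD
      simp only [mem_filter, mem_partialMatchings] at hD
      obtain ⟨hD, s, hs⟩ := hD
      exact ⟨⟨D.erase (s, n), s⟩, mem_sigma.2 ⟨mem_partialMatchings.2 (hD.erase_chord hs),
        hD.mem_openPoints_erase_chord hs⟩, insert_erase hs⟩

/-- The number of crossings of `D` when a ray is drawn from each point of `S` out past all other
points: a ray crosses exactly the chords that it starts under. -/
def rayCrossNum (D : Finset (ℕ × ℕ)) (S : Finset ℕ) : ℕ :=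
  ∑ p ∈ D, (#{q ∈ D | p.1 < q.1 ∧ q.1 < p.2 ∧ p.2 < q.2} + #{t ∈ S | p.1 < t ∧ t < p.2})

lemma rayCrossNum_insert_right {n : ℕ} {D : Finset (ℕ × ℕ)} (hD : ∀ p ∈ D, p.2 ≤ n)
    (S : Finset ℕ) : rayCrossNum D (insert n S) = rayCrossNum D S := by
  refine sum_congr rfl fun p hp => ?_
  rw [filter_insert, if_neg fun h => (hD p hp).not_gt h.2]

lemma rayCrossNum_insert_erase {n s : ℕ} {D : Finset (ℕ × ℕ)} {S : Finset ℕ}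
    (hD : ∀ p ∈ D, p.2 < n) (hS : ∀ t ∈ S, t < n) (hs : s ∈ S) :
    rayCrossNum (insert (s, n) D) (S.erase s) = rayCrossNum D S + #{t ∈ S | s < t} := by
  have notMem : (s, n) ∉ D := fun h => (hD _ h).false
  have new_chord : #{q ∈ insert (s, n) D | s < q.1 ∧ q.1 < n ∧ n < q.2} +
      #{t ∈ S.erase s | s < t ∧ t < n} = #{t ∈ S | s < t} := by
    rw [filter_false_of_mem, card_empty, zero_add]
    · congr 1; grind
    · grind
  have old_chord (p) (hp : p ∈ D) :
      #{q ∈ insert (s, n) D | p.1 < q.1 ∧ q.1 < p.2 ∧ p.2 < q.2} +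
        #{t ∈ S.erase s | p.1 < t ∧ t < p.2} =
      #{q ∈ D | p.1 < q.1 ∧ q.1 < p.2 ∧ p.2 < q.2} + #{t ∈ S | p.1 < t ∧ t < p.2} := by
    have := hD p hp
    rw [filter_insert, filter_erase]
    by_cases h : p.1 < s ∧ s < p.2
    · rw [if_pos ⟨h.1, h.2, this⟩, card_insert_of_notMem (by simp [notMem])]
      have := card_erase_add_one (s := {t ∈ S | p.1 < t ∧ t < p.2}) (mem_filter.2 ⟨hs, h⟩)
      omega
    · rw [if_neg (by tauto), erase_eq_of_notMem (by simp [h])]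
  rw [rayCrossNum, sum_insert notMem, new_chord, sum_congr rfl old_chord, add_comm, rayCrossNum]

lemma sum_pow_card_filter_lt {R α : Type*} [Semiring R] [LinearOrder α] (q : R) (S : Finset α) :
    ∑ s ∈ S, q ^ #{t ∈ S | s < t} = ∑ i ∈ range #S, q ^ i := by
  induction S using Finset.induction_on_min with
  | empty => simp
  | insert a S ha ih =>
    rw [sum_insert fun h => (ha a h).false, card_insert_of_notMem fun h => (ha a h).false,
      sum_range_succ, ← ih, add_comm]
    congr 1
    · refine sum_congr rfl fun s hs => ?_
      rw [filter_insert, if_neg (ha s hs).not_gt]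
    · rw [filter_insert, if_neg (lt_irrefl a), filter_true_of_mem ha]

section PartialSum

variable {R : Type*} [CommSemiring R] (q : R)

/-- The generating function, by crossings of chords and rays, of the partial matchings of
`0, …, n - 1` with `h` open points. -/
noncomputable def partialSum (n h : ℕ) : R :=
  ∑ D ∈ partialMatchings n with #(openPoints n D) = h, q ^ rayCrossNum D (openPoints n D)

@[simp]
lemma partialSum_zero_zero : partialSum q 0 0 = 1 := by
  simp [partialSum, rayCrossNum, openPoints]

lemma partialSum_eq_zero_of_lt {n h : ℕ} (hn : n < h) : partialSum q n h = 0 := by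
  rw [partialSum, filter_false_of_mem, sum_empty]
  intro D _ hD
  have := card_filter_le (range n) fun v => ∀ p ∈ D, v ≠ p.1 ∧ v ≠ p.2
  rw [card_range, ← openPoints] at this
  omega

lemma sum_rayCrossNum_last_open (n h : ℕ) :
    (∑ D ∈ partialMatchings n, if #(openPoints (n + 1) D) = h then
        q ^ rayCrossNum D (openPoints (n + 1) D) else 0) =
      ∑ D ∈ partialMatchings n with #(openPoints n D) + 1 = h,
        q ^ rayCrossNum D (openPoints n D) := by
  rw [sum_filter]
  refine sum_congr rfl fun D hD => ?_
  rw [mem_partialMatchings] at hD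
  rw [hD.openPoints_succ, rayCrossNum_insert_right fun p hp => (hD.snd_lt p hp).le,
    card_insert_of_notMem fun h => (mem_openPoints.1 h).1.false]

lemma sum_rayCrossNum_last_closed (n h : ℕ) :
    (∑ D ∈ partialMatchings n, ∑ s ∈ openPoints n D,
        if #(openPoints (n + 1) (insert (s, n) D)) = h then
          q ^ rayCrossNum (insert (s, n) D) (openPoints (n + 1) (insert (s, n) D)) else 0) =
      (∑ i ∈ range (h + 1), q ^ i) * partialSum q n (h + 1) := by
  rw [partialSum, sum_filter, mul_sum]
  refine sum_congr rfl fun D hD => ?_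
  rw [mem_partialMatchings] at hD
  have closing (s) (hs : s ∈ openPoints n D) :
      (if #(openPoints (n + 1) (insert (s, n) D)) = h then
        q ^ rayCrossNum (insert (s, n) D) (openPoints (n + 1) (insert (s, n) D)) else 0) =
      if #(openPoints n D) = h + 1 then
        q ^ rayCrossNum D (openPoints n D) * q ^ #{t ∈ openPoints n D | s < t} else 0 := by
    simp only [openPoints_insert_chord, ← card_erase_add_one hs, add_left_inj, ← pow_add,
      rayCrossNum_insert_erase hD.snd_lt (fun _ ht => (mem_openPoints.1 ht).1) hs]
  rw [sum_congr rfl closing]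
  split_ifs with hcard
  · rw [← mul_sum, sum_pow_card_filter_lt, hcard, mul_comm]
  · simp

lemma partialSum_succ (n h : ℕ) :
    partialSum q (n + 1) h =
      ∑ D ∈ partialMatchings n with #(openPoints n D) + 1 = h, q ^ rayCrossNum D (openPoints n D) +
        (∑ i ∈ range (h + 1), q ^ i) * partialSum q n (h + 1) := by
  rw [partialSum, sum_filter, sum_partialMatchings_succ, sum_rayCrossNum_last_open,
    sum_rayCrossNum_last_closed]

lemma partialSum_succ_zero (n : ℕ) : partialSum q (n + 1) 0 = partialSum q n 1 := by
  simp [partialSum_succ]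

lemma partialSum_succ_succ (n h : ℕ) :
    partialSum q (n + 1) (h + 1) =
      partialSum q n h + (∑ i ∈ range (h + 2), q ^ i) * partialSum q n (h + 2) := by
  simp only [partialSum_succ q n (h + 1), add_left_inj]
  rfl

end PartialSum

lemma one_sub_pow_mul_partialSum {R : Type*} [CommRing R] (q : R) {n h r : ℕ} (hn : h + 2 * r = n) :
    (1 - q) ^ r * partialSum q n h = ballotSum q h r := by
  induction n generalizing h r with
  | zero =>
    obtain ⟨rfl, rfl⟩ : h = 0 ∧ r = 0 := by omega
    simp
  | succ n ih =>
    rcases h with _ | h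
    · obtain ⟨r, rfl⟩ : ∃ s, r = s + 1 := ⟨r - 1, by omega⟩
      rw [partialSum_succ_zero, ballotSum_zero_succ, ← ih (by omega : 1 + 2 * r = n)]
      ring
    · have drop := ih (by omega : h + 2 * r = n)
      rw [partialSum_succ_succ]
      rcases r with _ | r
      · simpa [partialSum_eq_zero_of_lt q (by omega : n < h + 2)] using drop
      · rw [ballotSum_succ_succ, ← drop, ← ih (by omega : h + 2 + 2 * r = n),
          ← mul_neg_geom_sum]
        ring

section NatChords

variable {n : ℕ}

/-- The chords of `E` as pairs of natural numbers. -/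
def natChords (E : Finset (Fin n × Fin n)) : Finset (ℕ × ℕ) :=
  E.map (Fin.valEmbedding.prodMap Fin.valEmbedding)

lemma forall_mem_natChords {E : Finset (Fin n × Fin n)} {P : ℕ × ℕ → Prop} :
    (∀ p ∈ natChords E, P p) ↔ ∀ p ∈ E, P (p.1, p.2) :=
  forall_mem_map

lemma exists_natChords_eq {D : Finset (ℕ × ℕ)} (hfst : ∀ p ∈ D, p.1 < n)
    (hsnd : ∀ p ∈ D, p.2 < n) : ∃ E : Finset (Fin n × Fin n), natChords E = D := by
  refine ⟨univ.filter fun p => ((p.1 : ℕ), (p.2 : ℕ)) ∈ D, Finset.ext fun p => ?_⟩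
  simp only [natChords, mem_map, mem_filter, mem_univ, true_and]
  constructor
  · rintro ⟨p, hp, rfl⟩
    exact hp
  · exact fun hp => ⟨(⟨p.1, hfst p hp⟩, ⟨p.2, hsnd p hp⟩), hp, rfl⟩

lemma rayCrossNum_natChords (E : Finset (Fin n × Fin n)) :
    rayCrossNum (natChords E) ∅ = crossNum E := by
  simp only [rayCrossNum, crossNum, card_filter, sum_product, natChords, sum_map, sum_empty,
    add_zero]
  rfl

end NatChords

namespace CircMatching

variable {n : ℕ}

lemma isPartialMatching_natChords (M : CircMatching n) :
    IsPartialMatching n (natChords M.chords) where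
  fst_lt_snd := forall_mem_natChords.2 M.lt
  snd_lt := forall_mem_natChords.2 fun p _ => p.2.isLt
  pairwiseDisjoint := by
    simp only [Set.PairwiseDisjoint, Set.Pairwise, mem_coe, forall_mem_natChords]
    intro p hp q hq hpq
    refine disjoint_left.2 fun v hvp hvq => hpq ?_
    simp only [mem_insert, mem_singleton] at hvp hvq
    have hvn : v < n := by omega
    rw [(M.mem_unique ⟨v, hvn⟩).unique ⟨hp, by grind⟩ ⟨hq, by grind⟩]

lemma openPoints_natChords (M : CircMatching n) : openPoints n (natChords M.chords) = ∅ := by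
  refine eq_empty_of_forall_notMem fun v hv => ?_
  obtain ⟨hvn, hv⟩ := mem_openPoints.1 hv
  obtain ⟨p, ⟨hp, hpv⟩, -⟩ := M.mem_unique ⟨v, hvn⟩
  have := forall_mem_natChords.1 hv p hp
  grind

lemma exists_natChords_chords_eq {D : Finset (ℕ × ℕ)} (hD : IsPartialMatching n D)
    (hopen : openPoints n D = ∅) : ∃ M : CircMatching n, natChords M.chords = D := by
  obtain ⟨E, rfl⟩ := exists_natChords_eq
    (fun p hp => (hD.fst_lt_snd p hp).trans (hD.snd_lt p hp)) hD.snd_lt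
  have disjoint (p) (hp : p ∈ E) (q) (hq : q ∈ E) (v : Fin n) (hpv : p.1 = v ∨ p.2 = v)
      (hqv : q.1 = v ∨ q.2 = v) : p = q := by
    have := hD.pairwiseDisjoint.elim_finset (mem_map_of_mem _ hp) (mem_map_of_mem _ hq) v
      (by aesop) (by aesop)
    exact (Fin.valEmbedding.prodMap Fin.valEmbedding).injective this
  refine ⟨⟨E, forall_mem_natChords.1 hD.fst_lt_snd, fun v => ?_⟩, rfl⟩
  obtain ⟨p, hp, hpv⟩ : ∃ p ∈ E, p.1 = v ∨ p.2 = v := by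
    have := eq_empty_iff_forall_notMem.1 hopen v
    rw [mem_openPoints, forall_mem_natChords] at this
    grind
  exact ⟨p, ⟨hp, hpv⟩, fun q ⟨hq, hqv⟩ => disjoint q hq p hp v hqv hpv⟩

lemma sum_pow_crossNum {R : Type*} [CommSemiring R] (q : R) :
    ∑ M : CircMatching n, q ^ crossNum M.chords = partialSum q n 0 := by
  refine sum_bij (fun M _ => natChords M.chords) ?_ ?_ ?_ ?_
  · intro M _
    simp [mem_partialMatchings, M.isPartialMatching_natChords, M.openPoints_natChords]
  · rintro ⟨D, _, _⟩ _ ⟨D', _, _⟩ _ h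
    simpa using map_injective _ h
  · intro D hD
    simp only [mem_filter, mem_partialMatchings, card_eq_zero] at hD
    simpa using exists_natChords_chords_eq hD.1 hD.2
  · intro M _
    rw [M.openPoints_natChords, rayCrossNum_natChords]

end CircMatching

theorem touchard_riordan_general {R : Type*} [CommRing R] (q : R) (m : ℕ) :
    (1 - q) ^ m * ∑ M : CircMatching (2 * m), q ^ crossNum M.chords =
      ∑ j ∈ range (2 * m + 1), (-1) ^ (j + m) * ((2 * m).choose j : R) *
        q ^ ((((j : ℤ) - m) * ((j : ℤ) - m - 1) / 2).toNat) := by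
  rw [CircMatching.sum_pow_crossNum, one_sub_pow_mul_partialSum q (zero_add _),
    ballotSum_zero_left]

end TouchardRiordan

/-- Touchard–Riordan formula: for every `m ≥ 0`, the polynomial
`Σ_M z^(cr(M))`, summed over all perfect matchings `M` of `2m` points on a
circle, equals `(1/(1−z)^m) · Σ_{k=−m}^{m} (−1)^k binom(2m, m+k) z^(binom(k,2))`
(stated here with the denominator cleared; the inner sum is reindexed by
`j = k + m ∈ {0, …, 2m}`, so that `(−1)^k = (−1)^(j+m)` and
`binom(k,2) = (j−m)(j−m−1)/2`). -/
theorem touchard_riordan (m : ℕ) :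
    (1 - Polynomial.X) ^ m *
        ∑ M : CircMatching (2 * m), (Polynomial.X : Polynomial ℚ) ^ crossNum M.chords =
      ∑ j ∈ Finset.range (2 * m + 1),
        Polynomial.C ((-1 : ℚ) ^ (j + m) * (Nat.choose (2 * m) j : ℚ)) *
          Polynomial.X ^ ((((j : ℤ) - m) * ((j : ℤ) - m - 1) / 2).toNat) := by
  simpa using touchard_riordan_general (X : ℚ[X]) m
end
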